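/- Let X be a complemented subspace of X_p, let Z be a subspace of X, and let ε, β, β' be positive constants with ε ≤ 1 such that (a) r(z) ≥ β' for all nonzero z ∈ Z, and (b) for every x ∈ X with r(x) > β there exists z ∈ Z with |x − z|_2 < ε·|x|_2. Then X is isomorphic to a complemented subspace of ℓ_p ⊕ ℓ_2. -/

import Mathlib

open scoped ENNReal

noncomputable section

/-- The sequence space `ℓ_p` (of real sequences), for a real exponent `p`. -/
abbrev SeqP (p : ℝ) := lp (fun _ : ℕ => ℝ) (ENNReal.ofReal p)

/-- The sequence space `ℓ_2` (of real sequences). -/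
abbrev Seq2 := lp (fun _ : ℕ => ℝ) 2

/-- The space `X_{p,w}`, realized as the submodule of `ℓ_p ⊕_∞ ℓ_2` consisting of the
pairs `(x, y)` with `y n = w n * x n`.  Since the norm on the product is the maximum of
the two norms, this is exactly the completion of the finitely supported sequences under
`‖a‖ = max {|a|_p, |a|_{2,w}}`, the element with coordinates `a` being identified with
the pair `(a, w·a)`. -/
def XpwMod (p : ℝ) (w : ℕ → ℝ) : Submodule ℝ (SeqP p × Seq2) where
  carrier := {z | ∀ n, (z.2 : ℕ → ℝ) n = w n * (z.1 : ℕ → ℝ) n}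
  add_mem' := by
    intro a b ha hb n
    simp only [Prod.fst_add, Prod.snd_add, lp.coeFn_add, Pi.add_apply, ha n, hb n]
    ring
  zero_mem' := by
    intro n
    simp
  smul_mem' := by
    intro c a ha n
    simp only [Prod.smul_fst, Prod.smul_snd, lp.coeFn_smul, Pi.smul_apply, ha n,
      smul_eq_mul]
    ring

/-- The space `X_{p,w}` with its natural norm `‖a‖ = max {|a|_p, |a|_{2,w}}`. -/
def Xpw (p : ℝ) (w : ℕ → ℝ) : Type := ↥(XpwMod p w)

variable {p : ℝ} {w : ℕ → ℝ}

instance [Fact (1 ≤ ENNReal.ofReal p)] : NormedAddCommGroup (Xpw p w) :=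
  inferInstanceAs (NormedAddCommGroup ↥(XpwMod p w))

instance [Fact (1 ≤ ENNReal.ofReal p)] : NormedSpace ℝ (Xpw p w) :=
  inferInstanceAs (NormedSpace ℝ ↥(XpwMod p w))

/-- The pair of coordinates (in `ℓ_p` and in weighted `ℓ_2`) of an element of `X_{p,w}`. -/
def Xpw.pair (x : Xpw p w) : SeqP p × Seq2 := (show ↥(XpwMod p w) from x).val

/-- The underlying sequence of coordinates of an element of `X_{p,w}`. -/
def seq (x : Xpw p w) : ℕ → ℝ := (Xpw.pair x).1

/-- `|x|_p` for `x ∈ X_{p,w}`. -/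
def nrmP (x : Xpw p w) : ℝ := ‖(Xpw.pair x).1‖

/-- `|x|_2 = |x|_{2,w}` for `x ∈ X_{p,w}`. -/
def nrm2 (x : Xpw p w) : ℝ := ‖(Xpw.pair x).2‖

/-- The ratio `r(x) = |x|_2 / |x|_p`. -/
def ratio (x : Xpw p w) : ℝ := nrm2 x / nrmP x

/-- `ω(E) = ∑_{n ∈ E} w_n^{2p/(p-2)}`. -/
def omegaE (p : ℝ) (w : ℕ → ℝ) (E : Set ℕ) : ℝ :=
  ∑' n : E, w (n : ℕ) ^ (2 * p / (p - 2))

/-- The pairing `⟨x, y⟩ = ∑_n x_n y_n w_n²`. -/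
def pairW (w : ℕ → ℝ) (x y : Xpw p w) : ℝ :=
  ∑' n, seq x n * seq y n * w n ^ 2

/-- `w` is a weight sequence suitable for Rosenthal's space `X_p`: it is positive and for
every `ε > 0`, `∑_{w_n < ε} w_n^{2p/(p-2)} = ∞`. -/
def IsXpWeight (p : ℝ) (w : ℕ → ℝ) : Prop :=
  (∀ n, 0 < w n) ∧
    ∀ ε : ℝ, 0 < ε →
      (∑' n : {n : ℕ | w n < ε}, ENNReal.ofReal (w (n : ℕ) ^ (2 * p / (p - 2)))) = ⊤

theorem memℓp_indicator {q : ℝ≥0∞} (E : Set ℕ) {f : ℕ → ℝ} (hf : Memℓp f q) :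
    Memℓp (E.indicator f) q := by
  rcases ENNReal.trichotomy q with hq | hq | hq
  · subst hq
    refine memℓp_zero ((memℓp_zero_iff.mp hf).subset ?_)
    intro i hi
    simp only [Set.mem_setOf_eq] at hi ⊢
    intro h
    exact hi (by simp [Set.indicator_apply, h])
  · subst hq
    obtain ⟨C, hC⟩ := (memℓp_infty_iff.mp hf)
    refine memℓp_infty ⟨C, ?_⟩
    rintro x ⟨i, rfl⟩
    exact le_trans (norm_indicator_le_norm_self f i) (hC ⟨i, rfl⟩)
  · refine memℓp_gen (Summable.of_nonneg_of_le (fun i => ?_) (fun i => ?_)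
      (hf.summable hq))
    · positivity
    · exact Real.rpow_le_rpow (norm_nonneg _) (norm_indicator_le_norm_self f i) hq.le

/-- The restriction `x ↦ x_{|E}` of elements of `X_{p,w}` to a set `E` of coordinates. -/
def restrict (E : Set ℕ) (x : Xpw p w) : Xpw p w :=
  show ↥(XpwMod p w) from
  ⟨(⟨E.indicator ((Xpw.pair x).1 : ℕ → ℝ), memℓp_indicator E (lp.memℓp (Xpw.pair x).1)⟩,
    ⟨E.indicator ((Xpw.pair x).2 : ℕ → ℝ), memℓp_indicator E (lp.memℓp (Xpw.pair x).2)⟩), by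
    intro n
    by_cases hn : n ∈ E
    · have h : ((Xpw.pair x).2 : ℕ → ℝ) n = w n * ((Xpw.pair x).1 : ℕ → ℝ) n :=
        (show ↥(XpwMod p w) from x).2 n
      simpa [Set.indicator_of_mem hn] using h
    · simp [Set.indicator_of_notMem hn]⟩

/-! ### Finite product Bernoulli weights -/

/-- Product Bernoulli weight. -/
def bw {ι : Type} [Fintype ι] (μ : ι → ℝ) (A : ι → Bool) : ℝ :=
  ∏ i, (if A i then μ i else 1 - μ i)

/-- Sign of a boolean. -/
def sg (b : Bool) : ℝ := if b then 1 else -1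

/-- Indicator of a boolean. -/
def bi (b : Bool) : ℝ := if b then 1 else 0

/-- flipping one coordinate -/
def flipAt {ι : Type} [DecidableEq ι] (i : ι) (A : ι → Bool) : ι → Bool :=
  Function.update A i (!(A i))

theorem flipAt_invol {ι : Type} [DecidableEq ι] (i : ι) :
    Function.Involutive (flipAt i) := by
  intro A
  simp [flipAt]

theorem sum_prod_bool {ι : Type} [Fintype ι] [DecidableEq ι] (g : ι → Bool → ℝ) :
    ∑ A : ι → Bool, ∏ i, g i (A i) = ∏ i, (g i true + g i false) := by
  have h := Finset.prod_univ_sum (fun _ : ι => (Finset.univ : Finset Bool)) g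
  rw [Fintype.piFinset_univ] at h
  rw [← h]
  simp

theorem bw_nonneg {ι : Type} [Fintype ι] {μ : ι → ℝ} (h0 : ∀ i, 0 ≤ μ i)
    (h1 : ∀ i, μ i ≤ 1) (A : ι → Bool) : 0 ≤ bw μ A := by
  refine Finset.prod_nonneg fun i _ => ?_
  split_ifs
  · exact h0 i
  · linarith [h1 i]

theorem bw_sum {ι : Type} [Fintype ι] [DecidableEq ι] (μ : ι → ℝ) :
    ∑ A : ι → Bool, bw μ A = 1 := by
  have := sum_prod_bool (fun i b => if b then μ i else 1 - μ i)
  simp only [bw]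
  rw [this]
  simp

theorem bw_split {ι : Type} [Fintype ι] [DecidableEq ι] (μ : ι → ℝ) (i : ι) (A : ι → Bool) :
    bw μ A = (if A i then μ i else 1 - μ i) *
      ∏ j ∈ Finset.univ.erase i, (if A j then μ j else 1 - μ j) := by
  rw [bw]
  exact (Finset.mul_prod_erase Finset.univ (fun j => if A j then μ j else 1 - μ j)
    (Finset.mem_univ i)).symm

theorem bw_split_flip {ι : Type} [Fintype ι] [DecidableEq ι] (μ : ι → ℝ) (i : ι)
    (A : ι → Bool) :
    bw μ (flipAt i A) = (if A i then 1 - μ i else μ i) *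
      ∏ j ∈ Finset.univ.erase i, (if A j then μ j else 1 - μ j) := by
  rw [bw_split μ i]
  congr 1
  · simp only [flipAt, Function.update_self]
    cases A i <;> simp
  · refine Finset.prod_congr rfl fun j hj => ?_
    have : j ≠ i := Finset.ne_of_mem_erase hj
    simp [flipAt, Function.update_of_ne this]

theorem bw_update {ι : Type} [Fintype ι] [DecidableEq ι] (μ : ι → ℝ) (i : ι)
    (f : (ι → Bool) → ℝ) :
    ∑ A, bw μ A * (bi (A i) * f A) = μ i * ∑ A, bw μ A * f (Function.update A i true) := by
  have key : ∑ A, bw μ A * f (Function.update A i true)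
      = ∑ A, (bi (A i) * (bw μ A + bw μ (flipAt i A)) * f A) := by
    have e1 : ∑ A, bw μ A * f (Function.update A i true)
        = ∑ A, (bi (A i) * bw μ A * f A)
          + ∑ A, (bi (!(A i)) * bw μ A * f (flipAt i A)) := by
      rw [← Finset.sum_add_distrib]
      refine Finset.sum_congr rfl fun A _ => ?_
      cases hA : A i
      · simp [bi, flipAt, hA]
      · have : Function.update A i true = A := by rw [← hA]; simp
        simp [bi, this]
    have e2 : ∑ A, (bi (!(A i)) * bw μ A * f (flipAt i A))
        = ∑ A, (bi (A i) * bw μ (flipAt i A) * f A) := by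
      rw [← Equiv.sum_comp (flipAt_invol i).toPerm]
      refine Finset.sum_congr rfl fun A _ => ?_
      simp only [Function.Involutive.coe_toPerm, (flipAt_invol i) A]
      simp [flipAt]
    rw [e1, e2, ← Finset.sum_add_distrib]
    refine Finset.sum_congr rfl fun A _ => by ring
  rw [key, Finset.mul_sum]
  refine Finset.sum_congr rfl fun A _ => ?_
  rw [bw_split_flip μ i A, bw_split μ i A]
  cases A i <;> simp [bi] ; ring

theorem bw_ind {ι : Type} [Fintype ι] [DecidableEq ι] (μ : ι → ℝ) (i : ι) :
    ∑ A, bw μ A * bi (A i) = μ i := by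
  have := bw_update μ i (fun _ => 1)
  simpa [bw_sum] using this

/-- second moments of signs -/
theorem sg_orth {ι : Type} [Fintype ι] [DecidableEq ι] (i j : ι) :
    ∑ s : ι → Bool, bw (fun _ => (1/2 : ℝ)) s * (sg (s i) * sg (s j))
      = if i = j then 1 else 0 := by
  split_ifs with h
  · subst h
    refine Eq.trans ?_ (bw_sum (fun _ : ι => (1/2 : ℝ)))
    refine Finset.sum_congr rfl fun s _ => ?_
    cases s i <;> simp [sg]
  · have : ∑ s : ι → Bool, bw (fun _ => (1/2 : ℝ)) s * (sg (s i) * sg (s j))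
        = - ∑ s : ι → Bool, bw (fun _ => (1/2 : ℝ)) s * (sg (s i) * sg (s j)) := by
      conv_lhs => rw [← Equiv.sum_comp (flipAt_invol i).toPerm]
      rw [← Finset.sum_neg_distrib]
      refine Finset.sum_congr rfl fun s _ => ?_
      simp only [Function.Involutive.coe_toPerm]
      rw [bw_split_flip, bw_split _ i s]
      have hj : flipAt i s j = s j := by
        simp [flipAt, Function.update_of_ne (Ne.symm h)]
      rw [hj]
      have hi : flipAt i s i = !(s i) := by simp [flipAt]
      rw [hi]
      generalize sg (s j) = y
      cases s i <;> norm_num [sg]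
    linarith

theorem sg_sq {ι : Type} [Fintype ι] [DecidableEq ι] (c : ι → ℝ) :
    ∑ s : ι → Bool, bw (fun _ => (1/2 : ℝ)) s * (∑ i, c i * sg (s i)) ^ 2
      = ∑ i, c i ^ 2 := by
  have : ∀ s : ι → Bool, bw (fun _ => (1/2 : ℝ)) s * (∑ i, c i * sg (s i)) ^ 2
      = ∑ i, ∑ j, c i * c j * (bw (fun _ => (1/2 : ℝ)) s * (sg (s i) * sg (s j))) := by
    intro s
    rw [sq, Finset.sum_mul_sum, Finset.mul_sum]
    refine Finset.sum_congr rfl fun i _ => ?_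
    rw [Finset.mul_sum]
    refine Finset.sum_congr rfl fun j _ => by ring
  simp_rw [this]
  rw [Finset.sum_comm]
  refine Finset.sum_congr rfl fun i _ => ?_
  rw [Finset.sum_comm]
  simp_rw [← Finset.mul_sum, sg_orth]
  simp [sq]

theorem sg_exp {ι : Type} [Fintype ι] [DecidableEq ι] (c : ι → ℝ) :
    ∑ s : ι → Bool, bw (fun _ => (1/2 : ℝ)) s * Real.exp (∑ i, c i * sg (s i))
      ≤ Real.exp ((∑ i, c i ^ 2) / 2) := by
  have e : ∀ s : ι → Bool, bw (fun _ => (1/2 : ℝ)) s * Real.exp (∑ i, c i * sg (s i))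
      = ∏ i, ((fun i b => (1/2) * Real.exp (c i * sg b)) i (s i)) := by
    intro s
    rw [Real.exp_sum, bw, ← Finset.prod_mul_distrib]
    refine Finset.prod_congr rfl fun i _ => ?_
    cases s i <;> norm_num
  rw [Finset.sum_congr rfl fun s _ => e s]
  rw [sum_prod_bool (fun i b => (1/2) * Real.exp (c i * sg b)), Finset.sum_div, Real.exp_sum]
  refine Finset.prod_le_prod (fun i _ => by positivity) fun i _ => ?_
  refine le_trans (le_of_eq ?_) (Real.cosh_le_exp_half_sq (c i))
  rw [Real.cosh_eq]
  simp [sg]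
  ring

/-- upper Khintchine inequality -/
theorem khintchine (p : ℝ) (hp : 0 < p) : ∃ C : ℝ, 0 < C ∧
    ∀ (ι : Type) [Fintype ι] [DecidableEq ι] (c : ι → ℝ),
    ∑ s : ι → Bool, bw (fun _ => (1/2 : ℝ)) s * |∑ i, c i * sg (s i)| ^ p
      ≤ C * (∑ i, c i ^ 2) ^ (p / 2) := by
  obtain ⟨m, hm⟩ := exists_nat_ge p
  set K : ℝ := 1 + m.factorial with hK
  have hbound : ∀ t : ℝ, |t| ^ p ≤ K * (Real.exp t + Real.exp (-t)) := by
    intro t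
    have h1 : |t| ^ p ≤ 1 + |t| ^ m := by
      rcases le_total |t| 1 with h | h
      · have : |t| ^ p ≤ 1 := Real.rpow_le_one (abs_nonneg t) h hp.le
        have : 0 ≤ |t| ^ m := by positivity
        linarith
      · have : |t| ^ p ≤ |t| ^ (m : ℝ) := Real.rpow_le_rpow_of_exponent_le h hm
        rw [Real.rpow_natCast] at this
        linarith
    have h2 := Real.pow_div_factorial_le_exp |t| (abs_nonneg t) m
    rw [div_le_iff₀ (by positivity)] at h2
    have h3 : Real.exp |t| ≤ Real.exp t + Real.exp (-t) := by
      rcases abs_cases t with ⟨h, _⟩ | ⟨h, _⟩ <;> rw [h] <;>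
        linarith [Real.exp_pos t, Real.exp_pos (-t)]
    have h4 : 1 ≤ Real.exp |t| := Real.one_le_exp (abs_nonneg t)
    have h5 : (0:ℝ) < m.factorial := by positivity
    calc |t| ^ p ≤ K * Real.exp |t| := by rw [hK]; nlinarith
      _ ≤ _ := by gcongr
  have hKpos : 0 < K := by positivity
  refine ⟨K * (2 * Real.exp (1/2)), by positivity, ?_⟩
  intro ι _ _ c
  have hb0 : ∀ s : ι → Bool, 0 ≤ bw (fun _ => (1/2 : ℝ)) s :=
    bw_nonneg (fun _ => by norm_num) (fun _ => by norm_num)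
  set σ := ∑ i, c i ^ 2 with hσ
  have hσ0 : 0 ≤ σ := Finset.sum_nonneg fun i _ => sq_nonneg _
  rcases hσ0.eq_or_lt with h0 | h0
  · have hc : ∀ i, c i = 0 := by
      intro i
      have := (Finset.sum_eq_zero_iff_of_nonneg (fun i _ => sq_nonneg (c i))).1
        (hσ.symm.trans h0.symm) i (Finset.mem_univ i)
      exact pow_eq_zero_iff (two_ne_zero) |>.1 this
    simp [hc, Real.zero_rpow hp.ne']
    positivity
  · set τ := Real.sqrt σ with hτ
    have hτ0 : 0 < τ := Real.sqrt_pos.2 h0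
    have hd : ∑ i, (c i / τ) ^ 2 = 1 := by
      simp_rw [div_pow]
      rw [← Finset.sum_div, hτ, Real.sq_sqrt h0.le, ← hσ, div_self h0.ne']
    have hτp : σ ^ (p / 2) = τ ^ p := by
      rw [hτ, Real.sqrt_eq_rpow, ← Real.rpow_mul h0.le]
      congr 1; ring
    have e1 := sg_exp (fun i => c i / τ)
    have e2 := sg_exp (fun i => -(c i / τ))
    simp only [neg_sq, hd, neg_mul, Finset.sum_neg_distrib] at e1 e2
    rw [hτp]
    calc ∑ s : ι → Bool, bw (fun _ => (1/2 : ℝ)) s * |∑ i, c i * sg (s i)| ^ p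
        = τ ^ p * ∑ s : ι → Bool, bw (fun _ => (1/2 : ℝ)) s
            * |∑ i, c i / τ * sg (s i)| ^ p := by
          rw [Finset.mul_sum]
          refine Finset.sum_congr rfl fun s _ => ?_
          have : ∑ i, c i * sg (s i) = τ * ∑ i, c i / τ * sg (s i) := by
            rw [Finset.mul_sum]
            refine Finset.sum_congr rfl fun i _ => ?_
            field_simp
          rw [this, abs_mul, abs_of_pos hτ0, Real.mul_rpow hτ0.le (abs_nonneg _)]
          ring
      _ ≤ τ ^ p * ∑ s : ι → Bool, bw (fun _ => (1/2 : ℝ)) s *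
            (K * (Real.exp (∑ i, c i / τ * sg (s i))
              + Real.exp (-∑ i, c i / τ * sg (s i)))) := by
          gcongr with s _
          · exact hb0 s
          · exact hbound _
      _ = τ ^ p * (K * (∑ s : ι → Bool, bw (fun _ => (1/2 : ℝ)) s *
            Real.exp (∑ i, c i / τ * sg (s i)) + ∑ s : ι → Bool, bw (fun _ => (1/2 : ℝ)) s *
            Real.exp (-∑ i, c i / τ * sg (s i)))) := by
          rw [← Finset.sum_add_distrib]
          congr 1
          rw [Finset.mul_sum]
          refine Finset.sum_congr rfl fun s _ => by ring
      _ ≤ τ ^ p * (K * (Real.exp (1/2) + Real.exp (1/2))) := by gcongr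
      _ = _ := by ring

/-- Rosenthal's inequality for nonnegative multiples of independent indicators. -/
theorem rosenthal_nonneg (s : ℝ) (hs : 1 < s) : ∃ C : ℝ, 0 < C ∧
    ∀ (ι : Type) [Fintype ι] [DecidableEq ι] (μ b : ι → ℝ), (∀ i, 0 ≤ μ i) →
    (∀ i, μ i ≤ 1) → (∀ i, 0 ≤ b i) →
    ∑ A : ι → Bool, bw μ A * (∑ i, b i * bi (A i)) ^ s
      ≤ C * (∑ i, b i ^ s * μ i + (∑ i, b i * μ i) ^ s) := by
  set K : ℝ := 2 ^ (s - 1) with hK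
  have hK0 : 0 < K := by positivity
  set τ : ℝ := 1 / (2 * K) with hτ
  have hτ0 : 0 < τ := by positivity
  have hτ1 : 0 < τ ^ (1 - s) := by positivity
  refine ⟨2 * K * (1 + τ ^ (1 - s)), by positivity, ?_⟩
  intro ι _ _ μ b h0 h1 hb
  have hw := bw_nonneg h0 h1
  set S : (ι → Bool) → ℝ := fun A => ∑ i, b i * bi (A i) with hS
  have hbi : ∀ x, 0 ≤ bi x := by intro x; cases x <;> simp [bi]
  have hS0 : ∀ A, 0 ≤ S A := fun A => Finset.sum_nonneg fun i _ => mul_nonneg (hb i) (hbi _)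
  set B := ∑ i, b i * μ i with hB
  have hB0 : 0 ≤ B := Finset.sum_nonneg fun i _ => mul_nonneg (hb i) (h0 i)
  have hupd : ∀ i A, S (Function.update A i true) ≤ b i + S A := by
    intro i A
    simp only [hS]
    rw [← Finset.add_sum_erase _ _ (Finset.mem_univ i),
      ← Finset.add_sum_erase (a := i) _ (fun i => b i * bi (A i)) (Finset.mem_univ i)]
    have : ∑ x ∈ Finset.univ.erase i, b x * bi (Function.update A i true x)
        = ∑ x ∈ Finset.univ.erase i, b x * bi (A x) :=
      Finset.sum_congr rfl fun x hx => by
        rw [Function.update_of_ne (Finset.ne_of_mem_erase hx)]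
    rw [this]
    have := mul_nonneg (hb i) (hbi (A i))
    simp [bi] at this ⊢
    linarith
  have hadd : ∀ x y : ℝ, 0 ≤ x → 0 ≤ y → (x + y) ^ (s-1) ≤ K * (x ^ (s-1) + y ^ (s-1)) := by
    intro x y hx hy
    have hx' : 0 ≤ x ^ (s-1) := by positivity
    have hy' : 0 ≤ y ^ (s-1) := by positivity
    rcases le_total x y with h | h
    · calc (x+y)^(s-1) ≤ (2 * y)^(s-1) := by
            apply Real.rpow_le_rpow <;> linarith
        _ = K * y^(s-1) := by rw [Real.mul_rpow (by norm_num) hy]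
        _ ≤ _ := by gcongr; linarith
    · calc (x+y)^(s-1) ≤ (2 * x)^(s-1) := by
            apply Real.rpow_le_rpow <;> linarith
        _ = K * x^(s-1) := by rw [Real.mul_rpow (by norm_num) hx]
        _ ≤ _ := by gcongr; linarith
  have hpow : ∀ x : ℝ, 0 ≤ x → x ^ s = x * x ^ (s - 1) := by
    intro x hx
    rcases hx.eq_or_lt with h | h
    · rw [← h, Real.zero_rpow (by linarith)]; ring
    · rw [Real.rpow_sub_one h.ne']; field_simp
  have hyoung : ∀ x : ℝ, 0 ≤ x → B * x ^ (s-1) ≤ τ * x ^ s + τ ^ (1 - s) * B ^ s := by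
    intro x hx
    have hx' : 0 ≤ x ^ (s-1) := by positivity
    have hBs : 0 ≤ B ^ s := by positivity
    rcases le_total B (τ * x) with h | h
    · have : B * x ^ (s-1) ≤ τ * x ^ s := by
        rw [hpow x hx, ← mul_assoc]; gcongr
      have : 0 ≤ τ ^ (1 - s) * B ^ s := by positivity
      linarith
    · have h2 : x ≤ B / τ := by rw [le_div_iff₀ hτ0]; linarith
      have : x ^ (s-1) ≤ (B/τ) ^ (s-1) := Real.rpow_le_rpow hx h2 (by linarith)
      have e : B * (B/τ)^(s-1) = τ ^ (1 - s) * B ^ s := by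
        rw [Real.div_rpow hB0 hτ0.le, hpow B hB0, show 1 - s = -(s-1) by ring,
          Real.rpow_neg hτ0.le]
        field_simp
      have h3 : B * x ^ (s-1) ≤ B * (B/τ)^(s-1) := by gcongr
      have : 0 ≤ τ * x ^ s := by positivity
      linarith
  set U := ∑ A : ι → Bool, bw μ A * (S A) ^ s with hU
  have step1 : U = ∑ i, b i * (μ i * ∑ A, bw μ A * (S (Function.update A i true)) ^ (s-1)) := by
    rw [hU]
    have : ∀ A, bw μ A * (S A) ^ s = ∑ i, b i * (bw μ A * (bi (A i) * (S A) ^ (s-1))) := by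
      intro A
      rw [hpow _ (hS0 A)]
      nth_rewrite 1 [hS]
      simp only []
      rw [Finset.sum_mul, Finset.mul_sum]
      refine Finset.sum_congr rfl fun i _ => by ring
    simp_rw [this]
    rw [Finset.sum_comm]
    refine Finset.sum_congr rfl fun i _ => ?_
    rw [← Finset.mul_sum, bw_update μ i (fun A => S A ^ (s-1))]
  have step2 : U ≤ ∑ i, b i * (μ i * ∑ A, bw μ A * (K * (b i ^ (s-1) + S A ^ (s-1)))) := by
    rw [step1]
    refine Finset.sum_le_sum fun i _ => ?_
    refine mul_le_mul_of_nonneg_left ?_ (hb i)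
    refine mul_le_mul_of_nonneg_left ?_ (h0 i)
    refine Finset.sum_le_sum fun A _ => ?_
    refine mul_le_mul_of_nonneg_left ?_ (hw A)
    exact (Real.rpow_le_rpow (hS0 _) (hupd i A) (by linarith)).trans (hadd _ _ (hb i) (hS0 A))
  have step3 : ∑ i, b i * (μ i * ∑ A, bw μ A * (K * (b i ^ (s-1) + S A ^ (s-1))))
      = K * (∑ i, b i ^ s * μ i + ∑ A, bw μ A * (B * S A ^ (s-1))) := by
    have e : ∀ i, b i * (μ i * ∑ A, bw μ A * (K * (b i ^ (s-1) + S A ^ (s-1))))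
        = K * (b i ^ s * μ i) + K * ((b i * μ i) * ∑ A, bw μ A * S A ^ (s-1)) := by
      intro i
      have : ∑ A, bw μ A * (K * (b i ^ (s-1) + S A ^ (s-1)))
          = K * b i ^ (s-1) + K * ∑ A, bw μ A * S A ^ (s-1) := by
        rw [Finset.mul_sum, ← mul_one (K * b i ^ (s-1)), ← bw_sum μ, Finset.mul_sum,
          ← Finset.sum_add_distrib]
        refine Finset.sum_congr rfl fun A _ => by ring
      rw [this, hpow _ (hb i)]; ring
    simp_rw [e]
    rw [Finset.sum_add_distrib, ← Finset.mul_sum, ← Finset.mul_sum, ← Finset.sum_mul, ← hB,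
      ← mul_add]
    congr 2
    rw [Finset.mul_sum]
    refine Finset.sum_congr rfl fun A _ => by ring
  have step4 : ∑ A, bw μ A * (B * S A ^ (s-1)) ≤ τ * U + τ ^ (1 - s) * B ^ s := by
    calc ∑ A, bw μ A * (B * S A ^ (s-1))
        ≤ ∑ A, bw μ A * (τ * S A ^ s + τ ^ (1 - s) * B ^ s) := by
          refine Finset.sum_le_sum fun A _ => ?_
          exact mul_le_mul_of_nonneg_left (hyoung _ (hS0 A)) (hw A)
      _ = _ := by
          simp_rw [mul_add]
          rw [Finset.sum_add_distrib, ← Finset.sum_mul, bw_sum, hU, Finset.mul_sum, one_mul]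
          congr 1
          refine Finset.sum_congr rfl fun A _ => by ring
  have hA0 : 0 ≤ ∑ i, b i ^ s * μ i :=
    Finset.sum_nonneg fun i _ => mul_nonneg (Real.rpow_nonneg (hb i) _) (h0 i)
  have hBs : 0 ≤ B ^ s := by positivity
  have hKτ : K * τ = 1/2 := by rw [hτ]; field_simp
  have f1 : U ≤ K * (∑ i, b i ^ s * μ i + (τ * U + τ ^ (1 - s) * B ^ s)) := by
    rw [step3] at step2
    exact step2.trans (by gcongr)
  have f2 : U ≤ 2 * K * (∑ i, b i ^ s * μ i) + 2 * K * (τ ^ (1 - s) * B ^ s) := by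
    have : K * (∑ i, b i ^ s * μ i + (τ * U + τ ^ (1 - s) * B ^ s))
      = K * (∑ i, b i ^ s * μ i) + (K * τ) * U + K * (τ ^ (1 - s) * B ^ s) := by ring
    rw [this, hKτ] at f1
    linarith
  have g1 : 0 ≤ K * τ ^ (1-s) * (∑ i, b i ^ s * μ i) := by positivity
  have g2 : 0 ≤ K * B ^ s := by positivity
  nlinarith

theorem sum_rpow_le_rpow_sum' {ι : Type} (t : Finset ι) (a : ι → ℝ) (ha : ∀ i, 0 ≤ a i)
    {r : ℝ} (hr : 1 ≤ r) : ∑ i ∈ t, a i ^ r ≤ (∑ i ∈ t, a i) ^ r := by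
  classical
  induction t using Finset.induction_on with
  | empty => simp [Real.zero_rpow (by linarith : r ≠ 0)]
  | insert i t hi ih =>
    rw [Finset.sum_insert hi, Finset.sum_insert hi]
    exact (by gcongr : a i ^ r + ∑ i ∈ t, a i ^ r ≤ a i ^ r + (∑ i ∈ t, a i) ^ r).trans
      (Real.add_rpow_le_rpow_add (ha i) (Finset.sum_nonneg fun i _ => ha i) hr)

theorem rpow_sum_le_sum_rpow' {ι : Type} (t : Finset ι) (a : ι → ℝ) (ha : ∀ i, 0 ≤ a i)
    {r : ℝ} (hr0 : 0 < r) (hr : r ≤ 1) : (∑ i ∈ t, a i) ^ r ≤ ∑ i ∈ t, a i ^ r := by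
  classical
  induction t using Finset.induction_on with
  | empty => simp [Real.zero_rpow hr0.ne']
  | insert i t hi ih =>
    rw [Finset.sum_insert hi, Finset.sum_insert hi]
    refine (Real.rpow_add_le_add_rpow (ha i) (Finset.sum_nonneg fun i _ => ha i) hr0.le hr).trans ?_
    gcongr

theorem sq_rpow_half (x r : ℝ) : (x ^ 2) ^ (r / 2) = |x| ^ r := by
  rw [← sq_abs, ← Real.rpow_natCast, ← Real.rpow_mul (abs_nonneg x)]
  congr 1
  push_cast
  ring

theorem jensen_q {Ω : Type} [Fintype Ω] (M : Ω → ℝ) (hM : ∀ ω, 0 ≤ M ω) (hM1 : ∑ ω, M ω = 1)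
    (f : Ω → ℝ) {q : ℝ} (hq0 : 0 < q) (hq : q ≤ 2) :
    ∑ ω, M ω * |f ω| ^ q ≤ (∑ ω, M ω * f ω ^ 2) ^ (q / 2) := by
  have h := Real.rpow_arith_mean_le_arith_mean_rpow Finset.univ M (fun ω => |f ω| ^ q)
    (fun i _ => hM i) hM1 (fun i _ => by positivity) (p := 2 / q) (by rw [le_div_iff₀ hq0]; linarith)
  have h0 : 0 ≤ ∑ ω, M ω * |f ω| ^ q :=
    Finset.sum_nonneg fun i _ => mul_nonneg (hM i) (by positivity)
  have h2 := Real.rpow_le_rpow (by positivity) h (by positivity : 0 ≤ q / 2)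
  rw [← Real.rpow_mul h0, show 2 / q * (q / 2) = 1 by field_simp, Real.rpow_one] at h2
  refine h2.trans (le_of_eq ?_)
  congr 1
  refine Finset.sum_congr rfl fun ω _ => ?_
  rw [← Real.rpow_mul (abs_nonneg _), show q * (2 / q) = 2 by field_simp, Real.rpow_two, sq_abs]

theorem scalar_choice (p : ℝ) (hp : 2 < p) (v : ℝ) (hv : 0 < v) :
    ∃ μ h : ℝ, 0 ≤ μ ∧ μ ≤ 1 ∧ 0 < h ∧ h ^ 2 * μ = v ^ 2 ∧ h ^ p * μ ≤ 1 + v ^ p ∧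
      (h / v ^ 2) ^ (p / (p - 1)) * μ ≤ 1 := by
  have hp1 : 0 < p - 1 := by linarith
  have hp2 : 0 < p - 2 := by linarith
  rcases le_total 1 v with h | h
  · refine ⟨1, v, by norm_num, le_rfl, hv, by ring, by linarith, ?_⟩
    rw [mul_one]
    refine Real.rpow_le_one (by positivity) ?_ (by positivity)
    rw [div_le_one (by positivity)]
    nlinarith
  · have hvp : 0 ≤ v ^ p := by positivity
    refine ⟨v ^ (2 * p / (p - 2)), v ^ (-2 / (p - 2)), by positivity,
      Real.rpow_le_one hv.le h (by positivity), by positivity, ?_, ?_, ?_⟩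
    · rw [← Real.rpow_natCast, ← Real.rpow_natCast, ← Real.rpow_mul hv.le, ← Real.rpow_add hv]
      congr 1
      push_cast
      field_simp
      ring
    · rw [← Real.rpow_mul hv.le, ← Real.rpow_add hv]
      rw [show -2 / (p - 2) * p + 2 * p / (p - 2) = 0 by ring, Real.rpow_zero]
      linarith
    · rw [← Real.rpow_two, ← Real.rpow_sub hv, ← Real.rpow_mul hv.le, ← Real.rpow_add hv]
      rw [show (-2 / (p - 2) - 2) * (p / (p - 1)) + 2 * p / (p - 2) = 0 by field_simp; ring,
        Real.rpow_zero]

theorem rosenthal_system (p : ℝ) (hp : 2 < p) : ∃ C : ℝ, 0 < C ∧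
    ∀ (ι : Type) [Fintype ι] [DecidableEq ι] (v : ι → ℝ), (∀ i, 0 < v i) →
    ∃ (M : ((ι → Bool) × (ι → Bool)) → ℝ) (X : ι → ((ι → Bool) × (ι → Bool)) → ℝ),
      (∀ ω, 0 ≤ M ω) ∧ (∑ ω, M ω = 1) ∧
      (∀ i j, ∑ ω, M ω * (X i ω * X j ω) = if i = j then v i ^ 2 else 0) ∧
      (∀ c : ι → ℝ, ∑ ω, M ω * |∑ i, c i * X i ω| ^ p ≤
        C * (∑ i, |c i| ^ p + (∑ i, (v i * c i) ^ 2) ^ (p / 2))) ∧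
      (∀ c : ι → ℝ, ∑ ω, M ω * |∑ i, c i / v i ^ 2 * X i ω| ^ (p / (p - 1)) ≤
        ∑ i, |c i| ^ (p / (p - 1))) := by
  obtain ⟨C1, hC1, K1⟩ := khintchine p (by linarith)
  obtain ⟨C2, hC2, K2⟩ := rosenthal_nonneg (p / 2) (by linarith)
  refine ⟨C1 * (C2 * 2), by positivity, ?_⟩
  intro ι _ _ v hv
  choose μ h hμ0 hμ1 hh hhv hhp hhq using fun i => scalar_choice p hp (v i) (hv i)
  have hbw := bw_nonneg hμ0 hμ1
  have hbs : ∀ s : ι → Bool, 0 ≤ bw (fun _ => (1/2 : ℝ)) s :=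
    bw_nonneg (fun _ => by norm_num) (fun _ => by norm_num)
  have hbi2 : ∀ b, bi b ^ 2 = bi b := by intro b; cases b <;> simp [bi]
  have hbi0 : ∀ b, 0 ≤ bi b := by intro b; cases b <;> simp [bi]
  have hp1 : 0 < p - 1 := by linarith
  have hq0 : 0 < p / (p - 1) := by positivity
  have hq2 : p / (p - 1) ≤ 2 := by rw [div_le_iff₀ hp1]; linarith
  refine ⟨fun ω => bw (fun _ => (1/2 : ℝ)) ω.1 * bw μ ω.2,
    fun i ω => h i * sg (ω.1 i) * bi (ω.2 i), ?_, ?_, ?_, ?_, ?_⟩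
  · exact fun ω => mul_nonneg (hbs _) (hbw _)
  · rw [Fintype.sum_prod_type]
    simp_rw [← Finset.mul_sum, bw_sum, mul_one]
    exact bw_sum _
  · intro i j
    rw [Fintype.sum_prod_type]
    have : ∀ s : ι → Bool, ∑ A : ι → Bool, (bw (fun _ => (1/2 : ℝ)) s * bw μ A *
        ((h i * sg (s i) * bi (A i)) * (h j * sg (s j) * bi (A j))))
        = (bw (fun _ => (1/2 : ℝ)) s * (sg (s i) * sg (s j))) *
          (h i * h j * ∑ A : ι → Bool, bw μ A * (bi (A i) * bi (A j))) := by
      intro s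
      rw [Finset.mul_sum, Finset.mul_sum]
      refine Finset.sum_congr rfl fun A _ => by ring
    simp only [this]
    rw [← Finset.sum_mul, sg_orth]
    split_ifs with hij
    · subst hij
      simp_rw [← sq, hbi2]
      rw [bw_ind, ← hhv]
      ring
    · simp
  · intro c
    rw [Fintype.sum_prod_type_right]
    have e1 : ∀ A : ι → Bool, ∑ s : ι → Bool, bw (fun _ => (1/2 : ℝ)) s * bw μ A *
        |∑ i, c i * (h i * sg (s i) * bi (A i))| ^ p
        ≤ bw μ A * (C1 * (∑ i, (c i * h i) ^ 2 * bi (A i)) ^ (p / 2)) := by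
      intro A
      have := K1 ι (fun i => c i * h i * bi (A i))
      simp only [mul_pow _ (bi _), hbi2] at this
      refine le_trans (le_of_eq ?_) (mul_le_mul_of_nonneg_left this (hbw A))
      rw [Finset.mul_sum]
      refine Finset.sum_congr rfl fun s _ => ?_
      rw [show ∑ i, c i * (h i * sg (s i) * bi (A i)) = ∑ i, c i * h i * bi (A i) * sg (s i) from
        Finset.sum_congr rfl fun i _ => by ring]
      ring
    refine (Finset.sum_le_sum fun A _ => e1 A).trans ?_
    have e2 : ∑ A : ι → Bool, bw μ A * (C1 * (∑ i, (c i * h i) ^ 2 * bi (A i)) ^ (p / 2))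
        = C1 * ∑ A : ι → Bool, bw μ A * (∑ i, (c i * h i) ^ 2 * bi (A i)) ^ (p / 2) := by
      rw [Finset.mul_sum]
      refine Finset.sum_congr rfl fun s _ => by ring
    rw [e2, mul_assoc]
    refine mul_le_mul_of_nonneg_left ?_ hC1.le
    refine (K2 ι μ (fun i => (c i * h i) ^ 2) hμ0 hμ1 (fun i => sq_nonneg _)).trans ?_
    rw [mul_assoc]
    refine mul_le_mul_of_nonneg_left ?_ hC2.le
    have e3 : ∑ i, (c i * h i) ^ 2 * μ i = ∑ i, (v i * c i) ^ 2 :=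
      Finset.sum_congr rfl fun i _ => by rw [mul_pow, mul_assoc, hhv]; ring
    have e4 : ∑ i, ((c i * h i) ^ 2) ^ (p / 2) * μ i
        ≤ ∑ i, |c i| ^ p + (∑ i, (v i * c i) ^ 2) ^ (p / 2) := by
      refine le_trans ?_ (add_le_add_right (sum_rpow_le_rpow_sum' Finset.univ
        (fun i => (v i * c i) ^ 2) (fun i => sq_nonneg _) (by linarith : 1 ≤ p / 2)) _)
      rw [← Finset.sum_add_distrib]
      refine Finset.sum_le_sum fun i _ => ?_
      rw [sq_rpow_half, sq_rpow_half, abs_mul, abs_mul, abs_of_pos (hh i), abs_of_pos (hv i),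
        Real.mul_rpow (abs_nonneg _) (hh i).le, Real.mul_rpow (hv i).le (abs_nonneg _)]
      have : 0 ≤ |c i| ^ p := by positivity
      nlinarith [hhp i]
    rw [e3]
    have : 0 ≤ ∑ i, |c i| ^ p := Finset.sum_nonneg fun i _ => by positivity
    linarith
  · intro c
    rw [Fintype.sum_prod_type_right]
    set q := p / (p - 1) with hq
    have e1 : ∀ A : ι → Bool, ∑ s : ι → Bool, bw (fun _ => (1/2 : ℝ)) s * bw μ A *
        |∑ i, c i / v i ^ 2 * (h i * sg (s i) * bi (A i))| ^ q
        ≤ bw μ A * ∑ i, |c i| ^ q * (h i / v i ^ 2) ^ q * bi (A i) := by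
      intro A
      have k1 := jensen_q (fun s : ι → Bool => bw (fun _ => (1/2 : ℝ)) s) hbs (bw_sum _)
        (fun s => ∑ i, (c i * (h i / v i ^ 2) * bi (A i)) * sg (s i)) hq0 hq2
      rw [sg_sq] at k1
      have k2 := k1.trans (rpow_sum_le_sum_rpow' Finset.univ _ (fun i => sq_nonneg _)
        (by positivity : 0 < q / 2) (by linarith))
      refine le_trans (le_of_eq ?_) ((mul_le_mul_of_nonneg_left k2 (hbw A)).trans (le_of_eq ?_))
      · rw [Finset.mul_sum]
        refine Finset.sum_congr rfl fun s _ => ?_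
        rw [show ∑ i, c i / v i ^ 2 * (h i * sg (s i) * bi (A i))
          = ∑ i, c i * (h i / v i ^ 2) * bi (A i) * sg (s i) from
          Finset.sum_congr rfl fun i _ => by ring]
        ring
      · congr 1
        refine Finset.sum_congr rfl fun i _ => ?_
        have hpos : 0 ≤ h i / v i ^ 2 := by have := hh i; positivity
        rw [sq_rpow_half, abs_mul, abs_mul, abs_of_nonneg hpos, abs_of_nonneg (hbi0 _),
          Real.mul_rpow (by positivity) (hbi0 _), Real.mul_rpow (by positivity) hpos]
        congr 1
        cases A i <;> simp [bi, Real.zero_rpow hq0.ne']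
    refine (Finset.sum_le_sum fun A _ => e1 A).trans ?_
    simp_rw [Finset.mul_sum]
    rw [Finset.sum_comm]
    refine Finset.sum_le_sum fun i _ => ?_
    have : ∑ A : ι → Bool, bw μ A * (|c i| ^ q * (h i / v i ^ 2) ^ q * bi (A i))
        = |c i| ^ q * ((h i / v i ^ 2) ^ q * ∑ A : ι → Bool, bw μ A * bi (A i)) := by
      rw [Finset.mul_sum, Finset.mul_sum]
      refine Finset.sum_congr rfl fun A _ => by ring
    rw [this, bw_ind]
    have h1 := hhq i
    have : 0 ≤ |c i| ^ q := by positivity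
    nlinarith

/-- The block factorization, abstract index sets. -/
theorem block_abs (p : ℝ) (hp : 2 < p) : ∃ C : ℝ, 0 < C ∧
    ∀ (ι : Type) [Fintype ι] [DecidableEq ι] (v : ι → ℝ), (∀ i, 0 < v i) →
    ∃ (a : (ι → ℝ) →ₗ[ℝ] (((ι → Bool) × (ι → Bool)) → ℝ))
      (b : (((ι → Bool) × (ι → Bool)) → ℝ) →ₗ[ℝ] (ι → ℝ)),
      (∀ x, b (a x) = x) ∧
      (∀ x, ∑ ω, |a x ω| ^ p ≤ C * (∑ i, |x i| ^ p + (∑ i, (v i * x i) ^ 2) ^ (p / 2))) ∧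
      (∀ f, ∑ i, |b f i| ^ p ≤ ∑ ω, |f ω| ^ p) ∧
      (∀ f, ∑ i, (v i * b f i) ^ 2 ≤ (∑ ω, |f ω| ^ p) ^ (2 / p)) := by
  obtain ⟨C, hC, H⟩ := rosenthal_system p hp
  refine ⟨C, hC, ?_⟩
  intro ι _ _ v hv
  obtain ⟨M, X, hM, hM1, hX, hXp, hXq⟩ := H ι v hv
  have hp0 : 0 < p := by linarith
  have hp1 : 0 < p - 1 := by linarith
  have hq0 : 0 < p / (p - 1) := by positivity
  have hq2 : p / (p - 1) ≤ 2 := by rw [div_le_iff₀ hp1]; linarith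
  have hconj : p.HolderConjugate (p / (p - 1)) := Real.HolderConjugate.conjExponent (by linarith)
  set q := p / (p - 1) with hq
  have hpq : 1 / p + 1 / q = 1 := by rw [hq]; field_simp; ring
  let a : (ι → ℝ) →ₗ[ℝ] (((ι → Bool) × (ι → Bool)) → ℝ) :=
    { toFun := fun x ω => M ω ^ (1 / p) * ∑ i, x i * X i ω
      map_add' := by
        intro x y; funext ω
        simp [add_mul, Finset.sum_add_distrib, mul_add]
      map_smul' := by
        intro r x; funext ω
        simp only [Pi.smul_apply, smul_eq_mul, RingHom.id_apply, mul_assoc, ← Finset.mul_sum]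
        ring }
  let b : (((ι → Bool) × (ι → Bool)) → ℝ) →ₗ[ℝ] (ι → ℝ) :=
    { toFun := fun f i => (∑ ω, f ω * (M ω ^ (1 / q) * X i ω)) / v i ^ 2
      map_add' := by
        intro x y; funext i
        simp [add_mul, Finset.sum_add_distrib, add_div]
      map_smul' := by
        intro r x; funext i
        simp only [Pi.smul_apply, smul_eq_mul, RingHom.id_apply, mul_assoc, ← Finset.mul_sum]
        ring }
  have ha : ∀ x ω, a x ω = M ω ^ (1 / p) * ∑ i, x i * X i ω := fun _ _ => rfl
  have hb : ∀ f i, b f i = (∑ ω, f ω * (M ω ^ (1 / q) * X i ω)) / v i ^ 2 := fun _ _ => rfl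
  have hMpq : ∀ ω, M ω ^ (1 / p) * M ω ^ (1 / q) = M ω := by
    intro ω
    rw [← Real.rpow_add' (hM ω) (by rw [hpq]; norm_num), hpq, Real.rpow_one]
  -- key duality
  have key : ∀ (f : ((ι → Bool) × (ι → Bool)) → ℝ) (c : ι → ℝ),
      ∑ i, c i * b f i ≤ (∑ ω, |f ω| ^ p) ^ (1 / p) *
        (∑ ω, M ω * |∑ i, c i / v i ^ 2 * X i ω| ^ q) ^ (1 / q) := by
    intro f c
    have e : ∑ i, c i * b f i
        = ∑ ω, f ω * (M ω ^ (1 / q) * ∑ i, c i / v i ^ 2 * X i ω) := by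
      simp_rw [hb, Finset.sum_div, Finset.mul_sum]
      rw [Finset.sum_comm]
      refine Finset.sum_congr rfl fun ω _ => Finset.sum_congr rfl fun i _ => by ring
    rw [e]
    refine (Real.inner_le_Lp_mul_Lq Finset.univ _ _ hconj).trans (le_of_eq ?_)
    congr 2
    refine Finset.sum_congr rfl fun ω _ => ?_
    rw [abs_mul, abs_of_nonneg (Real.rpow_nonneg (hM ω) _),
      Real.mul_rpow (Real.rpow_nonneg (hM ω) _) (abs_nonneg _), ← Real.rpow_mul (hM ω),
      one_div_mul_cancel hq0.ne', Real.rpow_one]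
  have hf0 : ∀ f : ((ι → Bool) × (ι → Bool)) → ℝ, 0 ≤ ∑ ω, |f ω| ^ p :=
    fun f => Finset.sum_nonneg fun i _ => by positivity
  refine ⟨a, b, ?_, ?_, ?_, ?_⟩
  · intro x
    funext i
    rw [hb]
    have e : ∀ ω, a x ω * (M ω ^ (1 / q) * X i ω) = ∑ j, x j * (M ω * (X i ω * X j ω)) := by
      intro ω
      rw [ha]
      calc _ = (M ω ^ (1 / p) * M ω ^ (1 / q)) * ((∑ j, x j * X j ω) * X i ω) := by ring
        _ = _ := by
          rw [hMpq, Finset.sum_mul, Finset.mul_sum]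
          refine Finset.sum_congr rfl fun j _ => by ring
    simp_rw [e]
    rw [Finset.sum_comm]
    simp_rw [← Finset.mul_sum, hX]
    have := hv i
    simp
    field_simp
  · intro x
    refine le_trans (le_of_eq ?_) (hXp x)
    refine Finset.sum_congr rfl fun ω _ => ?_
    rw [ha, abs_mul, abs_of_nonneg (Real.rpow_nonneg (hM ω) _),
      Real.mul_rpow (Real.rpow_nonneg (hM ω) _) (abs_nonneg _), ← Real.rpow_mul (hM ω),
      one_div_mul_cancel hp0.ne', Real.rpow_one]
  · intro f
    set D := ∑ i, |b f i| ^ p with hD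
    have hD0 : 0 ≤ D := Finset.sum_nonneg fun i _ => by positivity
    have k := key f (fun i => |b f i| ^ (p - 2) * b f i)
    have e1 : ∑ i, (|b f i| ^ (p - 2) * b f i) * b f i = D := by
      refine Finset.sum_congr rfl fun i _ => ?_
      rw [mul_assoc, ← sq, ← sq_abs, ← Real.rpow_natCast,
        ← Real.rpow_add' (abs_nonneg _) (by push_cast; linarith)]
      congr 1; push_cast; ring
    have e2 : ∑ i, |(|b f i| ^ (p - 2) * b f i)| ^ q = D := by
      refine Finset.sum_congr rfl fun i _ => ?_
      rw [abs_mul, abs_of_nonneg (by positivity : 0 ≤ |b f i| ^ (p - 2)),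
        ← Real.rpow_add_one' (abs_nonneg _) (by linarith), ← Real.rpow_mul (abs_nonneg _)]
      congr 1
      rw [hq]; field_simp; ring
    have k2 : D ≤ (∑ ω, |f ω| ^ p) ^ (1 / p) * D ^ (1 / q) := by
      rw [← e1]
      refine k.trans ?_
      rw [e1]
      have hE := hXq (fun i => |b f i| ^ (p - 2) * b f i)
      rw [e2] at hE
      refine mul_le_mul_of_nonneg_left ?_ (Real.rpow_nonneg (hf0 f) _)
      refine Real.rpow_le_rpow ?_ hE (by positivity)
      exact Finset.sum_nonneg fun i _ => mul_nonneg (hM _) (by positivity)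
    rcases hD0.eq_or_lt with h | h
    · rw [← h]; exact hf0 f
    · have e3 : D = D ^ (1 / p) * D ^ (1 / q) := by
        rw [← Real.rpow_add h, hpq, Real.rpow_one]
      nth_rewrite 1 [e3] at k2
      have k3 := le_of_mul_le_mul_right k2 (by positivity)
      exact (Real.rpow_le_rpow_iff hD0 (hf0 f) (by positivity)).1 k3
  · intro f
    set D := ∑ i, (v i * b f i) ^ 2 with hD
    have hD0 : 0 ≤ D := Finset.sum_nonneg fun i _ => by positivity
    have k := key f (fun i => v i ^ 2 * b f i)
    have e1 : ∑ i, (v i ^ 2 * b f i) * b f i = D :=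
      Finset.sum_congr rfl fun i _ => by ring
    have e2 : ∀ ω, ∑ i, (v i ^ 2 * b f i) / v i ^ 2 * X i ω = ∑ i, b f i * X i ω := by
      intro ω
      refine Finset.sum_congr rfl fun i _ => ?_
      have := hv i
      field_simp
    have e3 : ∑ ω, M ω * (∑ i, b f i * X i ω) ^ 2 = D := by
      have : ∀ ω, M ω * (∑ i, b f i * X i ω) ^ 2
          = ∑ i, ∑ j, b f i * b f j * (M ω * (X i ω * X j ω)) := by
        intro ω
        rw [sq, Finset.sum_mul_sum, Finset.mul_sum]
        refine Finset.sum_congr rfl fun i _ => ?_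
        rw [Finset.mul_sum]
        refine Finset.sum_congr rfl fun j _ => by ring
      simp_rw [this]
      rw [Finset.sum_comm]
      refine Finset.sum_congr rfl fun i _ => ?_
      rw [Finset.sum_comm]
      simp_rw [← Finset.mul_sum, hX]
      simp
      ring
    have k2 : D ≤ (∑ ω, |f ω| ^ p) ^ (1 / p) * D ^ (1 / 2 : ℝ) := by
      rw [← e1]
      refine k.trans ?_
      rw [e1]
      simp_rw [e2]
      have hE := jensen_q M hM hM1 (fun ω => ∑ i, b f i * X i ω) hq0 hq2
      rw [e3] at hE
      refine mul_le_mul_of_nonneg_left ?_ (Real.rpow_nonneg (hf0 f) _)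
      refine (Real.rpow_le_rpow (Finset.sum_nonneg fun i _ => mul_nonneg (hM _) (by positivity))
        hE (by positivity)).trans (le_of_eq ?_)
      rw [← Real.rpow_mul hD0]
      congr 1
      field_simp
    rcases hD0.eq_or_lt with h | h
    · rw [← h]; exact Real.rpow_nonneg (hf0 f) _
    · have e3 : D = D ^ (1 / 2 : ℝ) * D ^ (1 / 2 : ℝ) := by
        rw [← Real.rpow_add h]; norm_num
      nth_rewrite 1 [e3] at k2
      have k3 := le_of_mul_le_mul_right k2 (by positivity)
      have k4 := Real.rpow_le_rpow (by positivity) k3 (by norm_num : (0:ℝ) ≤ 2)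
      rw [← Real.rpow_mul hD0, ← Real.rpow_mul (hf0 f)] at k4
      rw [show 1 / p * 2 = 2 / p by ring] at k4
      simpa using k4

/-- The block factorization, concrete index sets in `ℕ`. -/
theorem block_nat (p : ℝ) (hp : 2 < p) : ∃ C : ℝ, 0 < C ∧
    ∀ (F : Finset ℕ) (v : ℕ → ℝ), (∀ i, 0 < v i) →
    ∃ (N : ℕ) (a : (ℕ → ℝ) →ₗ[ℝ] (ℕ → ℝ)) (b : (ℕ → ℝ) →ₗ[ℝ] (ℕ → ℝ)),
      (∀ x, ∀ i ∈ F, b (a x) i = x i) ∧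
      (∀ x j, N ≤ j → a x j = 0) ∧
      (∀ x, ∑ j ∈ Finset.range N, |a x j| ^ p ≤
        C * (∑ i ∈ F, |x i| ^ p + (∑ i ∈ F, (v i * x i) ^ 2) ^ (p / 2))) ∧
      (∀ f, ∑ i ∈ F, |b f i| ^ p ≤ ∑ j ∈ Finset.range N, |f j| ^ p) ∧
      (∀ f, ∑ i ∈ F, (v i * b f i) ^ 2 ≤ (∑ j ∈ Finset.range N, |f j| ^ p) ^ (2 / p)) := by
  obtain ⟨C, hC, H⟩ := block_abs p hp
  refine ⟨C, hC, ?_⟩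
  intro F v hv
  obtain ⟨a, b, h1, h2, h3, h4⟩ := H F (fun i => v i) (fun i => hv i)
  let Ω := ((F → Bool) × (F → Bool))
  let e : Ω ≃ Fin (Fintype.card Ω) := Fintype.equivFin Ω
  have hsum : ∀ g : ℕ → ℝ, ∑ ω : Ω, g (e ω) = ∑ j ∈ Finset.range (Fintype.card Ω), g j := by
    intro g
    rw [Finset.sum_range]
    exact Equiv.sum_comp e (fun j => g j)
  have hsumF : ∀ g : ℕ → ℝ, ∑ i : F, g i = ∑ i ∈ F, g i := fun g => Finset.sum_coe_sort F g
  let a' : (ℕ → ℝ) →ₗ[ℝ] (ℕ → ℝ) :=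
    { toFun := fun x j => if h : j < Fintype.card Ω then a (fun i : F => x i) (e.symm ⟨j, h⟩) else 0
      map_add' := by
        intro x y; funext j
        by_cases h : j < Fintype.card Ω
        · simp only [h, dite_true, Pi.add_apply]
          rw [← Pi.add_apply (a _) (a _), ← map_add]; rfl
        · simp [h]
      map_smul' := by
        intro r x; funext j
        by_cases h : j < Fintype.card Ω
        · simp only [h, dite_true, Pi.smul_apply, RingHom.id_apply]
          rw [← Pi.smul_apply r (a _), ← map_smul]; rfl
        · simp [h] }
  let b' : (ℕ → ℝ) →ₗ[ℝ] (ℕ → ℝ) :=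
    { toFun := fun f i => if h : i ∈ F then b (fun ω => f (e ω)) ⟨i, h⟩ else 0
      map_add' := by
        intro x y; funext j
        by_cases h : j ∈ F
        · simp only [h, dite_true, Pi.add_apply]
          rw [← Pi.add_apply (b _) (b _), ← map_add]; rfl
        · simp [h]
      map_smul' := by
        intro r x; funext j
        by_cases h : j ∈ F
        · simp only [h, dite_true, Pi.smul_apply, RingHom.id_apply]
          rw [← Pi.smul_apply r (b _), ← map_smul]; rfl
        · simp [h] }
  have ha : ∀ x ω, a' x (e ω) = a (fun i : F => x i) ω := by
    intro x ω
    change (if h : (e ω : ℕ) < Fintype.card Ω then a (fun i : F => x i) (e.symm ⟨e ω, h⟩) else 0) = _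
    rw [dif_pos (e ω).2]
    simp
  have hb : ∀ f (i : F), b' f i = b (fun ω => f (e ω)) i := by
    intro f i
    change (if h : (i : ℕ) ∈ F then b (fun ω => f (e ω)) ⟨i, h⟩ else 0) = _
    rw [dif_pos i.2]
  refine ⟨Fintype.card Ω, a', b', ?_, ?_, ?_, ?_, ?_⟩
  · intro x i hi
    rw [show i = ((⟨i, hi⟩ : F) : ℕ) from rfl, hb]
    simp_rw [ha]
    rw [h1]
  · intro x j hj
    change (if h : j < Fintype.card Ω then a (fun i : F => x i) (e.symm ⟨j, h⟩) else 0) = _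
    rw [dif_neg (by omega)]
  · intro x
    have := h2 (fun i : F => x i)
    rw [← hsum (fun j => |a' x j| ^ p), ← hsumF (fun i => |x i| ^ p),
      ← hsumF (fun i => (v i * x i) ^ 2)]
    simp_rw [ha]
    exact this
  · intro f
    have := h3 (fun ω => f (e ω))
    rw [← hsum (fun j => |f j| ^ p), ← hsumF (fun i => |b' f i| ^ p)]
    simp_rw [hb]
    exact this
  · intro f
    have := h4 (fun ω => f (e ω))
    rw [← hsum (fun j => |f j| ^ p), ← hsumF (fun i => (v i * b' f i) ^ 2)]
    simp_rw [hb]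
    exact this

/-! ### Cutting sequences in `ℓ_q` -/

/-- restriction of a sequence in `ℓ_q` to a set of coordinates -/
def cut {q : ℝ≥0∞} (E : Set ℕ) (f : lp (fun _ : ℕ => ℝ) q) : lp (fun _ : ℕ => ℝ) q :=
  ⟨E.indicator (f : ℕ → ℝ), memℓp_indicator E (lp.memℓp f)⟩

theorem cut_apply {q : ℝ≥0∞} (E : Set ℕ) (f : lp (fun _ : ℕ => ℝ) q) (n : ℕ) :
    (cut E f : ℕ → ℝ) n = E.indicator (f : ℕ → ℝ) n := rfl

theorem cut_add {q : ℝ≥0∞} (E : Set ℕ) (f g : lp (fun _ : ℕ => ℝ) q) :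
    cut E (f + g) = cut E f + cut E g := by
  ext n
  simp only [cut_apply, lp.coeFn_add, Pi.add_apply]
  by_cases h : n ∈ E <;> simp [h]

theorem cut_sub {q : ℝ≥0∞} (E : Set ℕ) (f g : lp (fun _ : ℕ => ℝ) q) :
    cut E (f - g) = cut E f - cut E g := by
  ext n
  simp only [cut_apply, lp.coeFn_sub, Pi.sub_apply]
  by_cases h : n ∈ E <;> simp [h]

theorem cut_Iio_add_Ici {q : ℝ≥0∞} (N : ℕ) (f : lp (fun _ : ℕ => ℝ) q) :
    cut (Set.Iio N) f + cut (Set.Ici N) f = f := by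
  ext n
  simp only [cut_apply, lp.coeFn_add, Pi.add_apply]
  by_cases h : n < N
  · simp [h]
  · simp [h, not_lt.1 h]

theorem cut_Iio_eq {q : ℝ≥0∞} (N : ℕ) (f : lp (fun _ : ℕ => ℝ) q) :
    cut (Set.Iio N) f = ∑ n ∈ Finset.range N, lp.single q n ((f : ℕ → ℝ) n) := by
  ext n
  rw [cut_apply, lp.coeFn_sum, Finset.sum_apply]
  simp only [lp.coeFn_single]
  by_cases h : n < N
  · rw [Finset.sum_eq_single n]
    · simp [h]
    · intro b _ hb
      simp [Pi.single_apply, hb.symm]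
    · simp [h]
  · rw [Finset.sum_eq_zero]
    · simp [h]
    · intro b hb
      have : n ≠ b := by rintro rfl; exact h (Finset.mem_range.1 hb)
      simp [Pi.single_apply, this]

theorem cut_Iio_norm_le {q : ℝ≥0∞} [Fact (1 ≤ q)] (N : ℕ) (f : lp (fun _ : ℕ => ℝ) q) :
    ‖cut (Set.Iio N) f‖ ≤ ∑ n ∈ Finset.range N, |(f : ℕ → ℝ) n| := by
  rw [cut_Iio_eq]
  refine (norm_sum_le _ _).trans (le_of_eq ?_)
  refine Finset.sum_congr rfl fun n _ => ?_
  rw [lp.norm_single (lt_of_lt_of_le one_pos Fact.out)]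
  rfl

theorem cut_norm_rpow {q : ℝ≥0∞} (hq : 0 < q.toReal) (N : ℕ) (f : lp (fun _ : ℕ => ℝ) q) :
    ‖f‖ ^ q.toReal = ‖cut (Set.Iio N) f‖ ^ q.toReal + ‖cut (Set.Ici N) f‖ ^ q.toReal := by
  have s : ∀ g : lp (fun _ : ℕ => ℝ) q, Summable fun n => ‖(g : ℕ → ℝ) n‖ ^ q.toReal :=
    fun g => (lp.memℓp g).summable hq
  rw [lp.norm_rpow_eq_tsum hq, lp.norm_rpow_eq_tsum hq, lp.norm_rpow_eq_tsum hq,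
    ← (s _).tsum_add (s _)]
  congr 1
  funext n
  simp only [cut_apply]
  by_cases h : n < N
  · simp [h, Real.zero_rpow hq.ne']
  · simp [h, not_lt.1 h, Real.zero_rpow hq.ne']

theorem cut_Ici_le {q : ℝ≥0∞} (hq : 0 < q.toReal) (N : ℕ) (f : lp (fun _ : ℕ => ℝ) q) :
    ‖cut (Set.Ici N) f‖ ≤ ‖f‖ := by
  have := cut_norm_rpow hq N f
  have h2 : 0 ≤ ‖cut (Set.Iio N) f‖ ^ q.toReal := Real.rpow_nonneg (lp.norm_nonneg' _) _
  exact (Real.rpow_le_rpow_iff (lp.norm_nonneg' _) (lp.norm_nonneg' _) hq).1 (by linarith)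

theorem cut_Iio_le {q : ℝ≥0∞} (hq : 0 < q.toReal) (N : ℕ) (f : lp (fun _ : ℕ => ℝ) q) :
    ‖cut (Set.Iio N) f‖ ≤ ‖f‖ := by
  have := cut_norm_rpow hq N f
  have h2 : 0 ≤ ‖cut (Set.Ici N) f‖ ^ q.toReal := Real.rpow_nonneg (lp.norm_nonneg' _) _
  exact (Real.rpow_le_rpow_iff (lp.norm_nonneg' _) (lp.norm_nonneg' _) hq).1 (by linarith)

theorem cut_tendsto {q : ℝ≥0∞} [Fact (1 ≤ q)] (hq : q ≠ ⊤) (f : lp (fun _ : ℕ => ℝ) q) :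
    Filter.Tendsto (fun N => ‖cut (Set.Ici N) f‖) Filter.atTop (nhds 0) := by
  have h := (lp.hasSum_single hq f).tendsto_sum_nat
  have h2 : Filter.Tendsto (fun N => ‖f - ∑ n ∈ Finset.range N, lp.single q n ((f : ℕ → ℝ) n)‖)
      Filter.atTop (nhds 0) := by
    have := (tendsto_const_nhds (x := f)).sub h
    simpa using this.norm
  refine h2.congr fun N => ?_
  rw [← cut_Iio_eq]
  congr 1
  rw [sub_eq_iff_eq_add, add_comm, cut_Iio_add_Ici]

/-! ### Basic facts on `X_{p,w}` -/

theorem pair_add [Fact (1 ≤ ENNReal.ofReal p)] (x y : Xpw p w) :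
    Xpw.pair (x + y) = Xpw.pair x + Xpw.pair y := rfl

theorem pair_sub [Fact (1 ≤ ENNReal.ofReal p)] (x y : Xpw p w) :
    Xpw.pair (x - y) = Xpw.pair x - Xpw.pair y := rfl

theorem pair_smul [Fact (1 ≤ ENNReal.ofReal p)] (c : ℝ) (x : Xpw p w) :
    Xpw.pair (c • x) = c • Xpw.pair x := rfl

theorem pair_snd (x : Xpw p w) (n : ℕ) :
    ((Xpw.pair x).2 : ℕ → ℝ) n = w n * ((Xpw.pair x).1 : ℕ → ℝ) n :=
  (show ↥(XpwMod p w) from x).2 n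

theorem toReal_p (hp : 2 < p) : (ENNReal.ofReal p).toReal = p :=
  ENNReal.toReal_ofReal (by linarith)

theorem tail_step (p : ℝ) (hp : 2 < p) [Fact (1 ≤ ENNReal.ofReal p)]
    (w : ℕ → ℝ) (Y : Submodule ℝ (Xpw p w)) (δ : ℝ) (hδ : 0 < δ)
    (H : ∀ (M : ℕ) (η : ℝ), 0 < η → ∃ u ∈ Y, nrmP u ≤ 2 ∧ δ / 2 ≤ nrm2 u ∧
      ∀ n < M, |seq u n| ≤ η) (x : Xpw p w) :
    ∃ u ∈ Y, nrmP (x + u) ^ p ≤ nrmP x ^ p + (2 ^ p + 1) ∧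
      nrm2 x ^ 2 + δ ^ 2 / 8 ≤ nrm2 (x + u) ^ 2 := by
  have hp0 : 0 < p := by linarith
  have hpr := toReal_p hp
  have hpr0 : 0 < (ENNReal.ofReal p).toReal := by rw [hpr]; exact hp0
  have h20 : 0 < (2 : ℝ≥0∞).toReal := by norm_num
  -- choice of τ
  have c1 : ContinuousAt (fun τ : ℝ => (nrmP x + τ) ^ p + (2 + τ) ^ p) 0 :=
    ContinuousAt.add
      (ContinuousAt.rpow_const (by fun_prop) (Or.inr hp0.le))
      (ContinuousAt.rpow_const (by fun_prop) (Or.inr hp0.le))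
  have c2 : ContinuousAt (fun τ : ℝ => (max (nrm2 x - 2 * τ) 0) ^ 2
      + (max (δ / 2 - 2 * τ) 0) ^ 2) 0 := by fun_prop
  have hx2 : 0 ≤ nrm2 x := norm_nonneg _
  have e1 : ∀ᶠ τ in nhds (0 : ℝ),
      (nrmP x + τ) ^ p + (2 + τ) ^ p < nrmP x ^ p + (2 ^ p + 1) := by
    refine c1.eventually_lt continuousAt_const ?_
    simp only [add_zero]
    linarith
  have e2 : ∀ᶠ τ in nhds (0 : ℝ), nrm2 x ^ 2 + δ ^ 2 / 8 <
      (max (nrm2 x - 2 * τ) 0) ^ 2 + (max (δ / 2 - 2 * τ) 0) ^ 2 := by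
    refine continuousAt_const.eventually_lt c2 ?_
    simp only [mul_zero, sub_zero]
    rw [max_eq_left hx2, max_eq_left (by positivity)]
    nlinarith
  obtain ⟨τ, ⟨hτ1, hτ2⟩, hτ0⟩ := (((e1.and e2).filter_mono nhdsWithin_le_nhds).and
    (self_mem_nhdsWithin (a := (0:ℝ)) (s := Set.Ioi 0))).exists
  have hτ0 : 0 < τ := hτ0
  obtain ⟨M, hM1, hM2⟩ := (((cut_tendsto ENNReal.ofReal_ne_top (Xpw.pair x).1).eventually
    (gt_mem_nhds hτ0)).and ((cut_tendsto (by norm_num) (Xpw.pair x).2).eventually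
    (gt_mem_nhds hτ0))).exists
  set D : ℝ := 1 + M + ∑ n ∈ Finset.range M, |w n| with hD
  have hW0 : 0 ≤ ∑ n ∈ Finset.range M, |w n| := Finset.sum_nonneg fun _ _ => abs_nonneg _
  have hM0 : (0:ℝ) ≤ M := Nat.cast_nonneg M
  have hD0 : 0 < D := by positivity
  obtain ⟨u, huY, hu1, hu2, hu3⟩ := H M (τ / D) (by positivity)
  have hτD : 0 ≤ τ / D := by positivity
  have g1 : ‖cut (Set.Iio M) (Xpw.pair u).1‖ ≤ τ := by
    refine (cut_Iio_norm_le M _).trans ?_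
    refine (Finset.sum_le_sum (g := fun _ => τ / D) fun n hn =>
      hu3 n (Finset.mem_range.1 hn)).trans ?_
    rw [Finset.sum_const, Finset.card_range, nsmul_eq_mul]
    rw [mul_div_assoc', div_le_iff₀ hD0]
    nlinarith
  have g2 : ‖cut (Set.Iio M) (Xpw.pair u).2‖ ≤ τ := by
    refine (cut_Iio_norm_le M _).trans ?_
    refine (Finset.sum_le_sum (g := fun n => |w n| * (τ / D)) fun n hn => ?_).trans ?_
    · rw [pair_snd, abs_mul]
      exact mul_le_mul_of_nonneg_left (hu3 n (Finset.mem_range.1 hn)) (abs_nonneg _)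
    · rw [← Finset.sum_mul, mul_div_assoc', div_le_iff₀ hD0]
      nlinarith
  refine ⟨u, huY, le_trans ?_ hτ1.le, hτ2.le.trans ?_⟩
  · have k := cut_norm_rpow hpr0 M (Xpw.pair (x + u)).1
    rw [hpr] at k
    change ‖(Xpw.pair (x + u)).1‖ ^ p ≤ _
    rw [k, pair_add, Prod.fst_add, cut_add, cut_add]
    have a1 : ‖cut (Set.Iio M) (Xpw.pair x).1 + cut (Set.Iio M) (Xpw.pair u).1‖ ≤ nrmP x + τ :=
      (norm_add_le _ _).trans (add_le_add (cut_Iio_le hpr0 M _) g1)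
    have a2 : ‖cut (Set.Ici M) (Xpw.pair x).1 + cut (Set.Ici M) (Xpw.pair u).1‖ ≤ 2 + τ := by
      refine (norm_add_le _ _).trans ?_
      have := (cut_Ici_le hpr0 M (Xpw.pair u).1).trans hu1
      linarith
    exact add_le_add (Real.rpow_le_rpow (norm_nonneg _) a1 hp0.le)
      (Real.rpow_le_rpow (norm_nonneg _) a2 hp0.le)
  · have k := cut_norm_rpow h20 M (Xpw.pair (x + u)).2
    simp only [ENNReal.toReal_ofNat, Real.rpow_two] at k
    change _ ≤ ‖(Xpw.pair (x + u)).2‖ ^ 2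
    rw [k, pair_add, Prod.snd_add, cut_add, cut_add]
    have t1 := norm_add_le (cut (Set.Iio M) (Xpw.pair x).2) (cut (Set.Ici M) (Xpw.pair x).2)
    have t2 := norm_add_le (cut (Set.Iio M) (Xpw.pair u).2) (cut (Set.Ici M) (Xpw.pair u).2)
    rw [cut_Iio_add_Ici] at t1 t2
    change nrm2 x ≤ _ at t1
    change nrm2 u ≤ _ at t2
    have t3 := norm_sub_le_norm_add (cut (Set.Iio M) (Xpw.pair x).2)
      (cut (Set.Iio M) (Xpw.pair u).2)
    have t4 := norm_sub_le_norm_add (cut (Set.Ici M) (Xpw.pair u).2)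
      (cut (Set.Ici M) (Xpw.pair x).2)
    rw [add_comm (cut (Set.Ici M) (Xpw.pair u).2)] at t4
    have b1 : max (nrm2 x - 2 * τ) 0 ≤
        ‖cut (Set.Iio M) (Xpw.pair x).2 + cut (Set.Iio M) (Xpw.pair u).2‖ :=
      max_le (by linarith) (norm_nonneg _)
    have b2 : max (δ / 2 - 2 * τ) 0 ≤
        ‖cut (Set.Ici M) (Xpw.pair x).2 + cut (Set.Ici M) (Xpw.pair u).2‖ :=
      max_le (by linarith) (norm_nonneg _)
    gcongr

theorem tail_small (p : ℝ) (hp : 2 < p) [Fact (1 ≤ ENNReal.ofReal p)]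
    (w : ℕ → ℝ) (Y : Submodule ℝ (Xpw p w)) (β : ℝ) (hβ : 0 < β)
    (hY : ∀ y ∈ Y, nrm2 y ≤ β * nrmP y) (δ : ℝ) (hδ : 0 < δ) :
    ∃ N : ℕ, ∀ N' ≥ N, ∀ y ∈ Y, ‖cut (Set.Ici N') (Xpw.pair y).2‖ ≤ δ * nrmP y := by
  have hp0 : 0 < p := by linarith
  have hpr := toReal_p hp
  have hpr0 : 0 < (ENNReal.ofReal p).toReal := by rw [hpr]; exact hp0
  have h20 : 0 < (2 : ℝ≥0∞).toReal := by norm_num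
  by_contra hcon
  push Not at hcon
  -- normalized bad vectors
  have hbad : ∀ N : ℕ, ∃ y ∈ Y, nrmP y = 1 ∧ ∃ N' ≥ N, δ ≤ ‖cut (Set.Ici N') (Xpw.pair y).2‖ := by
    intro N
    obtain ⟨N', hN', y, hy, hlt⟩ := hcon N
    have hpos : 0 < nrmP y := by
      rcases (norm_nonneg (Xpw.pair y).1).eq_or_lt with h | h
      · exfalso
        have h0 : nrmP y = 0 := h.symm
        have h1 := hY y hy
        have h2 := cut_Ici_le h20 N' (Xpw.pair y).2
        rw [h0] at h1 hlt
        have : nrm2 y = ‖(Xpw.pair y).2‖ := rfl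
        linarith
      · exact h
    refine ⟨(nrmP y)⁻¹ • y, Y.smul_mem _ hy, ?_, N', hN', ?_⟩
    · change ‖(nrmP y)⁻¹ • (Xpw.pair y).1‖ = 1
      rw [norm_smul, Real.norm_of_nonneg (by positivity)]
      exact inv_mul_cancel₀ hpos.ne'
    · have : cut (Set.Ici N') (Xpw.pair ((nrmP y)⁻¹ • y)).2
          = (nrmP y)⁻¹ • cut (Set.Ici N') (Xpw.pair y).2 := by
        ext n
        rw [pair_smul, Prod.smul_snd, lp.coeFn_smul, Pi.smul_apply, cut_apply, cut_apply]
        by_cases h : N' ≤ n <;> simp [h]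
      rw [this, norm_smul, Real.norm_of_nonneg (by positivity), ← div_eq_inv_mul,
        le_div_iff₀ hpos]
      exact hlt.le
  choose y hyY hy1 N' hN' hyδ using hbad
  -- coordinatewise convergent subsequence
  have hcpt : IsCompact (Set.univ.pi fun _ : ℕ => Set.Icc (-1 : ℝ) 1) :=
    isCompact_univ_pi fun _ => isCompact_Icc
  have hmem : ∀ k, seq (y k) ∈ (Set.univ.pi fun _ : ℕ => Set.Icc (-1 : ℝ) 1) := by
    intro k n _
    have := lp.norm_apply_le_norm (p := ENNReal.ofReal p)
      (by simp; linarith) (Xpw.pair (y k)).1 n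
    have h1 : ‖(Xpw.pair (y k)).1‖ = 1 := hy1 k
    rw [h1, Real.norm_eq_abs] at this
    exact abs_le.1 this
  obtain ⟨f, _, φ, hφ, hlim⟩ := hcpt.tendsto_subseq hmem
  have H : ∀ (M : ℕ) (η : ℝ), 0 < η → ∃ u ∈ Y, nrmP u ≤ 2 ∧ δ / 2 ≤ nrm2 u ∧
      ∀ n < M, |seq u n| ≤ η := by
    intro M η hη
    have hcv : ∀ᶠ k in Filter.atTop, ∀ n ∈ Finset.range M, |seq (y (φ k)) n - f n| ≤ η / 2 := by
      rw [Filter.eventually_all_finset]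
      intro n _
      have := (tendsto_pi_nhds.1 hlim) n
      have := (Metric.tendsto_nhds.1 this) (η / 2) (by positivity)
      filter_upwards [this] with k hk
      exact (Real.dist_eq _ _ ▸ hk).le
    obtain ⟨K, hK⟩ := Filter.eventually_atTop.1 hcv
    have ht := (cut_tendsto (by norm_num) (Xpw.pair (y (φ K))).2).eventually
      (gt_mem_nhds (half_pos hδ))
    obtain ⟨N0, hN0⟩ := Filter.eventually_atTop.1 ht
    set k := max K N0 with hk
    have hkN : N0 ≤ N' (φ k) :=
      (le_max_right K N0).trans ((hφ.id_le k).trans (hN' (φ k)))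
    refine ⟨y (φ k) - y (φ K), Y.sub_mem (hyY _) (hyY _), ?_, ?_, ?_⟩
    · change ‖(Xpw.pair (y (φ k))).1 - (Xpw.pair (y (φ K))).1‖ ≤ 2
      refine (norm_sub_le _ _).trans ?_
      have h1 : ‖(Xpw.pair (y (φ k))).1‖ = 1 := hy1 _
      have h2 : ‖(Xpw.pair (y (φ K))).1‖ = 1 := hy1 _
      rw [h1, h2]; norm_num
    · have h1 := cut_Ici_le h20 (N' (φ k)) (Xpw.pair (y (φ k) - y (φ K))).2
      refine le_trans ?_ h1
      rw [pair_sub, Prod.snd_sub, cut_sub]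
      have h2 := norm_sub_norm_le (cut (Set.Ici (N' (φ k))) (Xpw.pair (y (φ k))).2)
        (cut (Set.Ici (N' (φ k))) (Xpw.pair (y (φ K))).2)
      have h3 := hyδ (φ k)
      have h4 := hN0 _ hkN
      linarith
    · intro n hn
      have h1 := hK k (le_max_left _ _) n (Finset.mem_range.2 hn)
      have h2 := hK K le_rfl n (Finset.mem_range.2 hn)
      have : seq (y (φ k) - y (φ K)) n = (seq (y (φ k)) n - f n) - (seq (y (φ K)) n - f n) := by
        have : seq (y (φ k) - y (φ K)) n = seq (y (φ k)) n - seq (y (φ K)) n := rfl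
        rw [this]; ring
      rw [this]
      refine (abs_sub _ _).trans ?_
      linarith
  -- building large sums
  have hsum : ∀ m : ℕ, ∃ x ∈ Y, nrmP x ^ p ≤ m * (2 ^ p + 1) ∧ m * (δ ^ 2 / 8) ≤ nrm2 x ^ 2 := by
    intro m
    induction m with
    | zero =>
      refine ⟨0, Y.zero_mem, ?_, ?_⟩
      · have : nrmP (0 : Xpw p w) = 0 := by
          change ‖(0 : SeqP p)‖ = 0
          exact norm_zero
        rw [this, Real.zero_rpow hp0.ne']; simp
      · simp; positivity
    | succ m ih =>
      obtain ⟨x, hx, h1, h2⟩ := ih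
      obtain ⟨u, hu, h3, h4⟩ := tail_step p hp w Y δ hδ H x
      refine ⟨x + u, Y.add_mem hx hu, ?_, ?_⟩
      · push_cast; linarith
      · push_cast; linarith
  set A : ℝ := 2 ^ p + 1 with hA
  have hA0 : 0 < A := by positivity
  have hfin : ∀ m : ℕ, (m : ℝ) * (δ ^ 2 / 8) ≤ β ^ 2 * (A ^ (2 / p) * (m : ℝ) ^ (2 / p)) := by
    intro m
    obtain ⟨x, hx, h1, h2⟩ := hsum m
    have hx0 : 0 ≤ nrmP x := norm_nonneg _
    have hx2 : 0 ≤ nrm2 x := norm_nonneg _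
    have h3 := hY x hx
    have h4 : nrmP x ^ 2 ≤ A ^ (2 / p) * (m : ℝ) ^ (2 / p) := by
      have := Real.rpow_le_rpow (by positivity) h1 (by positivity : 0 ≤ 2 / p)
      rw [← Real.rpow_mul hx0, show p * (2 / p) = 2 by field_simp, Real.rpow_two,
        Real.mul_rpow (by positivity) hA0.le] at this
      linarith
    calc (m : ℝ) * (δ ^ 2 / 8) ≤ nrm2 x ^ 2 := h2
      _ ≤ (β * nrmP x) ^ 2 := by gcongr
      _ = β ^ 2 * nrmP x ^ 2 := by ring
      _ ≤ _ := by gcongr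
  have hexp : 0 < 1 - 2 / p := by
    rw [sub_pos, div_lt_one hp0]; exact hp
  have htop : Filter.Tendsto (fun m : ℕ => (m : ℝ) ^ (1 - 2 / p)) Filter.atTop Filter.atTop :=
    (tendsto_rpow_atTop hexp).comp tendsto_natCast_atTop_atTop
  obtain ⟨m, hm, hm1⟩ := ((htop.eventually_gt_atTop (β ^ 2 * A ^ (2 / p) / (δ ^ 2 / 8))).and
    (Filter.eventually_ge_atTop 1)).exists
  have hmpos : (0:ℝ) < m := by exact_mod_cast hm1
  rw [div_lt_iff₀ (by positivity)] at hm
  have h5 := hfin m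
  have h6 : (m : ℝ) = (m : ℝ) ^ (1 - 2 / p) * (m : ℝ) ^ (2 / p) := by
    rw [← Real.rpow_add hmpos]; simp
  have h7 : 0 < (m : ℝ) ^ (2 / p) := by positivity
  have h8 := mul_lt_mul_of_pos_right hm h7
  have h9 : (m : ℝ) ^ (1 - 2 / p) * (δ ^ 2 / 8) * (m : ℝ) ^ (2 / p) = m * (δ ^ 2 / 8) := by
    nth_rewrite 3 [h6]; ring
  rw [h9] at h8
  linarith

/-! ### Gluing the blocks together -/

theorem sum_blocks (N : ℕ → ℕ) (hN : StrictMono N) (hN0 : N 0 = 0) (g : ℕ → ℝ) (K : ℕ) :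
    ∑ k ∈ Finset.range K, ∑ i ∈ Finset.Ico (N k) (N (k + 1)), g i
      = ∑ i ∈ Finset.range (N K), g i := by
  induction K with
  | zero => simp [hN0]
  | succ K ih =>
    rw [Finset.sum_range_succ, ih, Finset.range_eq_Ico, Finset.range_eq_Ico]
    exact Finset.sum_Ico_consecutive g (Nat.zero_le _) (hN (Nat.lt_succ_self K)).le

theorem exists_block_index (N : ℕ → ℕ) (hN : StrictMono N) (hN0 : N 0 = 0) :
    ∃ κ : ℕ → ℕ, (∀ i, N (κ i) ≤ i ∧ i < N (κ i + 1)) ∧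
      ∀ i k, i ∈ Finset.Ico (N k) (N (k + 1)) → κ i = k := by
  have h : ∀ i, ∃ k, N k ≤ i ∧ i < N (k + 1) := by
    intro i
    have hex : ∃ k, i < N (k + 1) := ⟨i, (Nat.lt_succ_self i).trans_le (hN.le_apply)⟩
    classical
    refine ⟨Nat.find hex, ?_, Nat.find_spec hex⟩
    rcases Nat.eq_zero_or_pos (Nat.find hex) with h0 | h0
    · rw [h0, hN0]; exact Nat.zero_le _
    · have := Nat.find_min hex (Nat.sub_lt h0 one_pos)
      have e : Nat.find hex - 1 + 1 = Nat.find hex := by omega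
      rw [e] at this
      exact not_lt.1 this
  choose κ hκ using h
  refine ⟨κ, hκ, fun i k hk => ?_⟩
  rw [Finset.mem_Ico] at hk
  have h1 := hN.lt_iff_lt.1 ((hκ i).1.trans_lt hk.2)
  have h2 := hN.lt_iff_lt.1 (hk.1.trans_lt (hκ i).2)
  omega

/-- the pairing embedding -/
def pairEmb : (Σ _ : ℕ, ℕ) ↪ ℕ where
  toFun x := Nat.pair x.1 x.2
  inj' := by
    rintro ⟨a, b⟩ ⟨c, d⟩ h
    have := Nat.pair_eq_pair.1 h
    simp only at this
    rw [this.1, this.2]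

/-- the finite set of codes of pairs `(k,j)`, `k < K`, `j < M k` -/
def pairSet (K : ℕ) (M : ℕ → ℕ) : Finset ℕ :=
  ((Finset.range K).sigma fun k => Finset.range (M k)).map pairEmb

theorem sum_pairSet (K : ℕ) (M : ℕ → ℕ) (g : ℕ → ℝ) :
    ∑ n ∈ pairSet K M, g n
      = ∑ k ∈ Finset.range K, ∑ j ∈ Finset.range (M k), g (Nat.pair k j) := by
  rw [pairSet, Finset.sum_map, Finset.sum_sigma]
  rfl

/-- element of `X_{p,w}` with prescribed coordinates -/
def mkX (x : ℕ → ℝ) (h1 : Memℓp x (ENNReal.ofReal p)) (h2 : Memℓp (fun n => w n * x n) 2) :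
    Xpw p w :=
  show ↥(XpwMod p w) from ⟨(⟨x, h1⟩, ⟨fun n => w n * x n, h2⟩), fun _ => rfl⟩

theorem xext {x y : Xpw p w} (h : ∀ n, seq x n = seq y n) : x = y := by
  apply Subtype.ext
  refine Prod.ext ?_ ?_
  · ext n; exact h n
  · ext n
    have h1 := pair_snd x n
    have h2 := pair_snd y n
    have h3 := h n
    unfold seq at h3
    rw [← h3, ← h1] at h2
    exact h2.symm

theorem norm_eq_max [Fact (1 ≤ ENNReal.ofReal p)] (x : Xpw p w) :
    ‖x‖ = max (nrmP x) (nrm2 x) := rfl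

theorem glueA (p : ℝ) (hp : 2 < p) [Fact (1 ≤ ENNReal.ofReal p)]
    (Y : Submodule ℝ (Xpw p w)) (M : ℕ → ℕ) (a : ℕ → (ℕ → ℝ) →ₗ[ℝ] (ℕ → ℝ))
    (ha0 : ∀ k x j, M k ≤ j → a k x j = 0) (D : ℝ) (hD : 0 ≤ D)
    (hbd : ∀ y ∈ Y, ∀ K, ∑ k ∈ Finset.range K, ∑ j ∈ Finset.range (M k), |a k (seq y) j| ^ p
      ≤ D * nrmP y ^ p) :
    ∃ A : ↥Y →L[ℝ] SeqP p, ∀ (y : Y) (k j : ℕ),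
      (A y : ℕ → ℝ) (Nat.pair k j) = a k (seq (y : Xpw p w)) j := by
  have hp0 : 0 < p := by linarith
  have hpr := toReal_p hp
  have key : ∀ y ∈ Y, ∀ s : Finset ℕ,
      ∑ n ∈ s, ‖a n.unpair.1 (seq y) n.unpair.2‖ ^ (ENNReal.ofReal p).toReal
        ≤ D * nrmP y ^ p := by
    intro y hy s
    rw [hpr]
    refine le_trans ?_ (hbd y hy (s.sup id + 1))
    set g : ℕ → ℝ := fun n => ‖a n.unpair.1 (seq y) n.unpair.2‖ ^ p with hg
    have e : ∑ k ∈ Finset.range (s.sup id + 1), ∑ j ∈ Finset.range (M k), |a k (seq y) j| ^ p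
        = ∑ n ∈ pairSet (s.sup id + 1) M, g n := by
      rw [sum_pairSet]
      simp [hg]
    rw [e, ← Finset.sum_filter_ne_zero s]
    refine Finset.sum_le_sum_of_subset_of_nonneg ?_ fun n _ _ => by positivity
    intro n hn
    rw [Finset.mem_filter] at hn
    have hj : n.unpair.2 < M n.unpair.1 := by
      by_contra hcon
      apply hn.2
      simp [hg, ha0 _ _ _ (not_lt.1 hcon), Real.zero_rpow hp0.ne']
    have hk : n.unpair.1 < s.sup id + 1 :=
      Nat.lt_succ_of_le ((Nat.unpair_left_le n).trans (Finset.le_sup (f := id) hn.1))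
    rw [pairSet, Finset.mem_map]
    refine ⟨⟨n.unpair.1, n.unpair.2⟩, ?_, Nat.pair_unpair n⟩
    simp only [Finset.mem_sigma, Finset.mem_range]
    exact ⟨hk, hj⟩
  let L : ↥Y →ₗ[ℝ] SeqP p :=
    { toFun := fun y => ⟨fun n => a n.unpair.1 (seq (y : Xpw p w)) n.unpair.2,
        memℓp_gen' (key y y.2)⟩
      map_add' := by
        intro x y
        ext n
        change a n.unpair.1 (seq (x : Xpw p w) + seq (y : Xpw p w)) n.unpair.2 = _
        rw [map_add]
        rfl
      map_smul' := by
        intro c x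
        ext n
        change a n.unpair.1 (c • seq (x : Xpw p w)) n.unpair.2 = _
        rw [map_smul]
        rfl }
  refine ⟨L.mkContinuous (D ^ (1 / p)) ?_, ?_⟩
  · intro y
    have h1 : ‖L y‖ ≤ D ^ (1 / p) * nrmP (y : Xpw p w) := by
      have hn0 : 0 ≤ nrmP (y : Xpw p w) := norm_nonneg _
      refine lp.norm_le_of_forall_sum_le (by rw [hpr]; exact hp0) (by positivity) fun s => ?_
      refine (key y y.2 s).trans (le_of_eq ?_)
      rw [hpr, Real.mul_rpow (by positivity) hn0, ← Real.rpow_mul hD, one_div,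
        inv_mul_cancel₀ hp0.ne', Real.rpow_one]
    refine h1.trans (mul_le_mul_of_nonneg_left ?_ (by positivity))
    exact le_max_left (nrmP (y : Xpw p w)) (nrm2 (y : Xpw p w))
  · intro y k j
    change a (Nat.pair k j).unpair.1 (seq (y : Xpw p w)) (Nat.pair k j).unpair.2 = _
    rw [Nat.unpair_pair]

theorem glueB (p : ℝ) (hp : 2 < p) [Fact (1 ≤ ENNReal.ofReal p)]
    (N : ℕ → ℕ) (hN : StrictMono N) (hN0 : N 0 = 0)
    (M : ℕ → ℕ) (b : ℕ → (ℕ → ℝ) →ₗ[ℝ] (ℕ → ℝ))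
    (h1 : ∀ k f, ∑ i ∈ Finset.Ico (N k) (N (k + 1)), |b k f i| ^ p
      ≤ ∑ j ∈ Finset.range (M k), |f j| ^ p)
    (h2 : ∀ k f, ∑ i ∈ Finset.Ico (N k) (N (k + 1)), (2 ^ k * w i * b k f i) ^ 2
      ≤ (∑ j ∈ Finset.range (M k), |f j| ^ p) ^ (2 / p)) :
    ∃ B : SeqP p →L[ℝ] Xpw p w, ∀ (f : SeqP p) (k i : ℕ),
      i ∈ Finset.Ico (N k) (N (k + 1)) →
      seq (B f) i = b k (fun j => (f : ℕ → ℝ) (Nat.pair k j)) i := by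
  have hp0 : 0 < p := by linarith
  have hpr := toReal_p hp
  obtain ⟨κ, hκ, hκ'⟩ := exists_block_index N hN hN0
  let c : SeqP p → ℕ → ℝ := fun f i => b (κ i) (fun j => (f : ℕ → ℝ) (Nat.pair (κ i) j)) i
  have hc : ∀ f k i, i ∈ Finset.Ico (N k) (N (k + 1)) →
      c f i = b k (fun j => (f : ℕ → ℝ) (Nat.pair k j)) i := by
    intro f k i hi
    have := hκ' i k hi
    simp only [c, this]
  have hsub : ∀ s : Finset ℕ, s ⊆ Finset.range (N (s.sup id + 1)) := by
    intro s i hi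
    rw [Finset.mem_range]
    have : i ≤ s.sup id := Finset.le_sup (f := id) hi
    have h3 : s.sup id + 1 ≤ N (s.sup id + 1) := hN.le_apply
    omega
  have hf : ∀ (f : SeqP p) (K : ℕ), ∑ k ∈ Finset.range K, ∑ j ∈ Finset.range (M k),
      |(f : ℕ → ℝ) (Nat.pair k j)| ^ p ≤ ‖f‖ ^ p := by
    intro f K
    have := lp.sum_rpow_le_norm_rpow (by rw [hpr]; exact hp0) f (pairSet K M)
    rw [hpr, sum_pairSet] at this
    exact this
  have hfk : ∀ (f : SeqP p) (k : ℕ), ∑ j ∈ Finset.range (M k),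
      |(f : ℕ → ℝ) (Nat.pair k j)| ^ p ≤ ‖f‖ ^ p := by
    intro f k
    refine le_trans ?_ (hf f (k + 1))
    rw [Finset.sum_range_succ]
    have : 0 ≤ ∑ k ∈ Finset.range k, ∑ j ∈ Finset.range (M k),
      |(f : ℕ → ℝ) (Nat.pair k j)| ^ p := by positivity
    linarith
  have key1 : ∀ (f : SeqP p) (s : Finset ℕ),
      ∑ i ∈ s, ‖c f i‖ ^ (ENNReal.ofReal p).toReal ≤ ‖f‖ ^ p := by
    intro f s
    rw [hpr]
    refine (Finset.sum_le_sum_of_subset_of_nonneg (hsub s) fun n _ _ => by positivity).trans ?_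
    rw [← sum_blocks N hN hN0]
    refine le_trans (Finset.sum_le_sum fun k _ => ?_) (hf f _)
    refine le_trans (le_of_eq ?_) (h1 k _)
    refine Finset.sum_congr rfl fun i hi => ?_
    rw [hc f k i hi]; rfl
  have key2 : ∀ (f : SeqP p) (s : Finset ℕ),
      ∑ i ∈ s, ‖w i * c f i‖ ^ (2 : ℝ≥0∞).toReal ≤ 4 * ‖f‖ ^ 2 := by
    intro f s
    have e2 : (2 : ℝ≥0∞).toReal = ((2 : ℕ) : ℝ) := by norm_num
    rw [e2]
    simp only [Real.rpow_natCast, Real.norm_eq_abs, sq_abs]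
    refine (Finset.sum_le_sum_of_subset_of_nonneg (hsub s) fun n _ _ => by positivity).trans ?_
    rw [← sum_blocks N hN hN0]
    have hk : ∀ k, ∑ i ∈ Finset.Ico (N k) (N (k + 1)), (w i * c f i) ^ 2
        ≤ (1 / 4) ^ k * ‖f‖ ^ 2 := by
      intro k
      have h3 := h2 k (fun j => (f : ℕ → ℝ) (Nat.pair k j))
      have h4 : (∑ j ∈ Finset.range (M k), |(f : ℕ → ℝ) (Nat.pair k j)| ^ p) ^ (2 / p)
          ≤ ‖f‖ ^ 2 := by
        refine (Real.rpow_le_rpow (by positivity) (hfk f k) (by positivity)).trans (le_of_eq ?_)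
        rw [← Real.rpow_mul (norm_nonneg _), mul_div_cancel₀ _ hp0.ne']
        exact Real.rpow_natCast _ 2
      have h5 : ∑ i ∈ Finset.Ico (N k) (N (k + 1)), (w i * c f i) ^ 2
          = (1 / 4) ^ k * ∑ i ∈ Finset.Ico (N k) (N (k + 1)),
            (2 ^ k * w i * b k (fun j => (f : ℕ → ℝ) (Nat.pair k j)) i) ^ 2 := by
        rw [Finset.mul_sum]
        refine Finset.sum_congr rfl fun i hi => ?_
        rw [hc f k i hi]
        have : (1 / 4 : ℝ) ^ k * (2 ^ k) ^ 2 = 1 := by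
          rw [← pow_mul, mul_comm k 2, pow_mul, ← mul_pow]; norm_num
        rw [mul_assoc (2 ^ k : ℝ), mul_pow (2 ^ k : ℝ), ← mul_assoc, this, one_mul]
      rw [h5]
      exact mul_le_mul_of_nonneg_left (h3.trans h4) (by positivity)
    refine (Finset.sum_le_sum fun k _ => hk k).trans ?_
    rw [← Finset.sum_mul]
    refine mul_le_mul_of_nonneg_right ?_ (by positivity)
    rw [geom_sum_eq (by norm_num)]
    have : 0 ≤ (1 / 4 : ℝ) ^ (s.sup id + 1) := by positivity
    rw [div_le_iff_of_neg (by norm_num)]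
    linarith
  let L : SeqP p →ₗ[ℝ] Xpw p w :=
    { toFun := fun f => mkX (c f) (memℓp_gen' (key1 f)) (memℓp_gen' (key2 f))
      map_add' := by
        intro x y
        refine xext fun n => ?_
        change b (κ n) (fun j => ((x + y : SeqP p) : ℕ → ℝ) (Nat.pair (κ n) j)) n = c x n + c y n
        have : (fun j => ((x + y : SeqP p) : ℕ → ℝ) (Nat.pair (κ n) j))
          = (fun j => (x : ℕ → ℝ) (Nat.pair (κ n) j)) + fun j => (y : ℕ → ℝ) (Nat.pair (κ n) j) :=
          rfl
        rw [this, map_add]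
        rfl
      map_smul' := by
        intro r x
        refine xext fun n => ?_
        change b (κ n) (fun j => ((r • x : SeqP p) : ℕ → ℝ) (Nat.pair (κ n) j)) n = r * c x n
        have : (fun j => ((r • x : SeqP p) : ℕ → ℝ) (Nat.pair (κ n) j))
          = r • (fun j => (x : ℕ → ℝ) (Nat.pair (κ n) j)) := rfl
        rw [this, map_smul]
        rfl }
  refine ⟨L.mkContinuous 2 ?_, fun f k i hi => hc f k i hi⟩
  intro f
  rw [norm_eq_max]
  refine max_le ?_ ?_
  · have : nrmP (L f) ≤ ‖f‖ := by
      refine lp.norm_le_of_forall_sum_le (by rw [hpr]; exact hp0) (norm_nonneg _) fun s => ?_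
      refine (key1 f s).trans (le_of_eq ?_)
      rw [hpr]
    linarith [norm_nonneg f]
  · refine lp.norm_le_of_forall_sum_le (by norm_num) (by positivity) fun s => ?_
    refine (key2 f s).trans (le_of_eq ?_)
    have e2 : (2 : ℝ≥0∞).toReal = ((2 : ℕ) : ℝ) := by norm_num
    rw [e2, Real.rpow_natCast, mul_pow]
    norm_num

theorem assembly (p : ℝ) (hp : 2 < p) [Fact (1 ≤ ENNReal.ofReal p)]
    (w : ℕ → ℝ) (hw : ∀ n, 0 < w n) (Y : Submodule ℝ (Xpw p w)) (β : ℝ) (hβ : 0 < β)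
    (hY : ∀ y ∈ Y, nrm2 y ≤ β * nrmP y) :
    ∃ (A : ↥Y →L[ℝ] SeqP p) (B : SeqP p →L[ℝ] Xpw p w), ∀ y : Y, B (A y) = (y : Xpw p w) := by
  have hp0 : 0 < p := by linarith
  have hpr := toReal_p hp
  obtain ⟨C, hC, hblock⟩ := block_nat p hp
  have ht : ∀ k : ℕ, ∃ N, ∀ N' ≥ N, ∀ y ∈ Y,
      ‖cut (Set.Ici N') (Xpw.pair y).2‖ ≤ (1 / 4) ^ (k + 1) * nrmP y := fun k =>
    tail_small p hp w Y β hβ hY ((1 / 4) ^ (k + 1)) (by positivity)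
  choose T hT using ht
  let N : ℕ → ℕ := fun k => Nat.rec 0 (fun k n => max (n + 1) (T k)) k
  have hN0 : N 0 = 0 := rfl
  have hNs : ∀ k, N (k + 1) = max (N k + 1) (T k) := fun k => rfl
  have hN : StrictMono N := strictMono_nat_of_lt_succ fun k => by
    rw [hNs]; exact (Nat.lt_succ_self _).trans_le (le_max_left _ _)
  have htail : ∀ k, ∀ y ∈ Y,
      ‖cut (Set.Ici (N k)) (Xpw.pair y).2‖ ≤ (1 + β) * (1 / 4) ^ k * nrmP y := by
    intro k y hy
    have hn0 : 0 ≤ nrmP y := norm_nonneg _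
    cases k with
    | zero =>
      refine (cut_Ici_le (by norm_num) _ _).trans ((hY y hy).trans ?_)
      simp only [pow_zero, mul_one]
      nlinarith
    | succ k =>
      refine (hT k (N (k + 1)) (by rw [hNs]; exact le_max_right _ _) y hy).trans ?_
      have : 0 ≤ (1 / 4 : ℝ) ^ (k + 1) * nrmP y := by positivity
      nlinarith
  have hb := fun k => hblock (Finset.Ico (N k) (N (k + 1))) (fun i => 2 ^ k * w i)
    (fun i => mul_pos (by positivity) (hw i))
  choose M a b hba ha0 ha hb1 hb2 using hb
  obtain ⟨B, hB⟩ := glueB (w := w) p hp N hN hN0 M b hb1 hb2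
  have hA := glueA (w := w) p hp Y M a ha0 (C * (1 + 2 * (1 + β) ^ p)) (by positivity) (by
    intro y hy K
    have hn0 : 0 ≤ nrmP y := norm_nonneg _
    have hk2 : ∀ k, (∑ i ∈ Finset.Ico (N k) (N (k + 1)), (2 ^ k * w i * seq y i) ^ 2) ^ (p / 2)
        ≤ (1 / 2) ^ k * ((1 + β) ^ p * nrmP y ^ p) := by
      intro k
      have e2 : (2 : ℝ≥0∞).toReal = ((2 : ℕ) : ℝ) := by norm_num
      have h1 : ∑ i ∈ Finset.Ico (N k) (N (k + 1)), (w i * seq y i) ^ 2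
          ≤ ‖cut (Set.Ici (N k)) (Xpw.pair y).2‖ ^ 2 := by
        have := lp.sum_rpow_le_norm_rpow (by norm_num) (cut (Set.Ici (N k)) (Xpw.pair y).2)
          (Finset.Ico (N k) (N (k + 1)))
        rw [e2] at this
        simp only [Real.rpow_natCast] at this
        refine le_trans (le_of_eq ?_) this
        refine Finset.sum_congr rfl fun i hi => ?_
        rw [cut_apply, Set.indicator_of_mem (Set.mem_Ici.2 (Finset.mem_Ico.1 hi).1), pair_snd,
          Real.norm_eq_abs, sq_abs]
        rfl
      have h2 : ‖cut (Set.Ici (N k)) (Xpw.pair y).2‖ ^ 2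
          ≤ ((1 + β) * (1 / 4) ^ k * nrmP y) ^ 2 :=
        pow_le_pow_left₀ (norm_nonneg _) (htail k y hy) 2
      have h3 : ∑ i ∈ Finset.Ico (N k) (N (k + 1)), (2 ^ k * w i * seq y i) ^ 2
          ≤ ((1 / 2) ^ k * ((1 + β) * nrmP y)) ^ 2 := by
        have e : ∑ i ∈ Finset.Ico (N k) (N (k + 1)), (2 ^ k * w i * seq y i) ^ 2
            = (2 ^ k) ^ 2 * ∑ i ∈ Finset.Ico (N k) (N (k + 1)), (w i * seq y i) ^ 2 := by
          rw [Finset.mul_sum]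
          refine Finset.sum_congr rfl fun i _ => by ring
        have e' : (1 / 2 : ℝ) ^ k = 2 ^ k * (1 / 4) ^ k := by
          rw [← mul_pow]; norm_num
        rw [e, e']
        refine (mul_le_mul_of_nonneg_left (h1.trans h2) (by positivity)).trans (le_of_eq ?_)
        ring
      refine (Real.rpow_le_rpow (by positivity) h3 (by positivity)).trans ?_
      rw [sq_rpow_half, abs_of_nonneg (by positivity), Real.mul_rpow (by positivity) (by positivity),
        Real.mul_rpow (by positivity) hn0]
      refine mul_le_mul_of_nonneg_right ?_ (by positivity)
      have := Real.rpow_le_rpow_of_exponent_ge (x := (1 / 2 : ℝ) ^ k) (by positivity)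
        (pow_le_one₀ (by norm_num) (by norm_num)) (show (1 : ℝ) ≤ p by linarith)
      rwa [Real.rpow_one] at this
    have hs1 : ∑ k ∈ Finset.range K, ∑ i ∈ Finset.Ico (N k) (N (k + 1)), |seq y i| ^ p
        ≤ nrmP y ^ p := by
      rw [sum_blocks N hN hN0]
      have := lp.sum_rpow_le_norm_rpow (by rw [hpr]; exact hp0) (Xpw.pair y).1
        (Finset.range (N K))
      rw [hpr] at this
      exact this
    have hs2 : ∑ k ∈ Finset.range K, (1 / 2 : ℝ) ^ k ≤ 2 := by
      rw [geom_sum_eq (by norm_num), div_le_iff_of_neg (by norm_num)]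
      have : 0 ≤ (1 / 2 : ℝ) ^ K := by positivity
      linarith
    refine (Finset.sum_le_sum fun k _ => (ha k (seq y)).trans
      (mul_le_mul_of_nonneg_left (add_le_add_right (hk2 k) _) hC.le)).trans ?_
    rw [← Finset.mul_sum, Finset.sum_add_distrib, ← Finset.sum_mul, mul_assoc]
    refine mul_le_mul_of_nonneg_left ?_ hC.le
    have h4 : 0 ≤ (1 + β) ^ p * nrmP y ^ p := by positivity
    have h5 := mul_le_mul_of_nonneg_right hs2 h4
    linarith)
  obtain ⟨A, hA⟩ := hA
  refine ⟨A, B, fun y => xext fun i => ?_⟩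
  obtain ⟨κ, hκ, -⟩ := exists_block_index N hN hN0
  have hi : i ∈ Finset.Ico (N (κ i)) (N (κ i + 1)) := Finset.mem_Ico.2 (hκ i)
  rw [hB _ _ i hi, ← hba (κ i) (seq (y : Xpw p w)) i hi]
  have e : (fun j => (A y : ℕ → ℝ) (Nat.pair (κ i) j)) = a (κ i) (seq (y : Xpw p w)) :=
    funext fun j => hA y (κ i) j
  rw [e]

/-! ### Conclusion -/

instance completeX [Fact (1 ≤ ENNReal.ofReal p)] : CompleteSpace (Xpw p w) := by
  have hcl : IsClosed (XpwMod p w : Set (SeqP p × Seq2)) := by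
    have e : (XpwMod p w : Set (SeqP p × Seq2))
        = ⋂ n : ℕ, {z | (z.2 : ℕ → ℝ) n = w n * (z.1 : ℕ → ℝ) n} := by
      ext z
      simp only [Set.mem_iInter, Set.mem_ofPred_eq]
      rfl
    rw [e]
    refine isClosed_iInter fun n => isClosed_eq ?_ ?_
    · exact (continuous_apply n).comp ((lp.uniformContinuous_coe).continuous.comp continuous_snd)
    · exact continuous_const.mul
        ((continuous_apply n).comp ((lp.uniformContinuous_coe).continuous.comp continuous_fst))
  exact hcl.completeSpace_coe

/-- the map `x ↦ w·x` from `X_{p,w}` to `ℓ_2` -/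
def toL2 (p : ℝ) (w : ℕ → ℝ) [Fact (1 ≤ ENNReal.ofReal p)] : Xpw p w →L[ℝ] Seq2 :=
  (ContinuousLinearMap.snd ℝ (SeqP p) Seq2).comp (XpwMod p w).subtypeL

theorem norm_toL2 [Fact (1 ≤ ENNReal.ofReal p)] (x : Xpw p w) : ‖toL2 p w x‖ = nrm2 x := rfl

theorem nrmP_continuous [Fact (1 ≤ ENNReal.ofReal p)] :
    Continuous (nrmP : Xpw p w → ℝ) :=
  ((ContinuousLinearMap.fst ℝ (SeqP p) Seq2).comp (XpwMod p w).subtypeL).continuous.norm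

theorem main_factor (p : ℝ) (hp : 2 < p) [Fact (1 ≤ ENNReal.ofReal p)]
    (w : ℕ → ℝ) (hw : ∀ n, 0 < w n)
    (X : Submodule ℝ (Xpw p w)) (hX : X.ClosedComplemented)
    (Z : Submodule ℝ (Xpw p w)) (hZX : Z ≤ X)
    (ε β β' : ℝ) (hε1 : ε ≤ 1) (hβ : 0 < β) (hβ' : 0 < β')
    (ha : ∀ z ∈ Z, z ≠ 0 → ratio z ≥ β')
    (hb : ∀ x ∈ X, ratio x > β → ∃ z ∈ Z, nrm2 (x - z) < ε * nrm2 x) :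
    ∃ (A : ↥X →L[ℝ] SeqP p × Seq2) (B : SeqP p × Seq2 →L[ℝ] ↥X), Function.LeftInverse B A := by
  have hP0 : ∀ x : Xpw p w, 0 ≤ nrmP x := fun x => norm_nonneg _
  have h20 : ∀ x : Xpw p w, 0 ≤ nrm2 x := fun x => norm_nonneg _
  have hXc : IsClosed (X : Set (Xpw p w)) := hX.isClosed
  set W := Z.topologicalClosure with hW
  have hWX : W ≤ X := Z.topologicalClosure_minimal hZX hXc
  have hWc : IsClosed (W : Set (Xpw p w)) := Z.isClosed_topologicalClosure
  have : CompleteSpace W := hWc.completeSpace_coe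
  have hZβ : ∀ z ∈ Z, β' * nrmP z ≤ nrm2 z := by
    intro z hz
    rcases eq_or_ne (nrmP z) 0 with h0 | h0
    · rw [h0, mul_zero]; exact h20 z
    · have hz0 : z ≠ 0 := by
        rintro rfl
        exact h0 (norm_zero (E := SeqP p))
      have := ha z hz hz0
      unfold ratio at this
      exact (le_div_iff₀ (lt_of_le_of_ne (hP0 z) h0.symm)).1 this
  have hWβ : ∀ z ∈ W, β' * nrmP z ≤ nrm2 z := by
    have hcl : IsClosed {z : Xpw p w | β' * nrmP z ≤ nrm2 z} :=
      isClosed_le (continuous_const.mul nrmP_continuous) (toL2 p w).continuous.norm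
    intro z hz
    exact closure_minimal (fun z hz => hZβ z hz) hcl hz
  let JW : W →L[ℝ] Seq2 := (toL2 p w).comp W.subtypeL
  have hanti : AntilipschitzWith (Real.toNNReal (max β'⁻¹ 1)) JW := by
    refine JW.antilipschitz_of_bound ?_
    intro z
    have hc : (0 : ℝ) ≤ max β'⁻¹ 1 := le_max_of_le_right zero_le_one
    rw [Real.coe_toNNReal _ hc]
    change ‖(z : Xpw p w)‖ ≤ max β'⁻¹ 1 * nrm2 (z : Xpw p w)
    rw [norm_eq_max]
    refine max_le ?_ ?_
    · have h1 : nrmP (z : Xpw p w) ≤ β'⁻¹ * nrm2 (z : Xpw p w) := by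
        rw [inv_mul_eq_div, le_div_iff₀ hβ', mul_comm]
        exact hWβ z z.2
      exact h1.trans (mul_le_mul_of_nonneg_right (le_max_left _ _) (h20 _))
    · have := mul_le_mul_of_nonneg_right (le_max_right β'⁻¹ 1) (h20 (z : Xpw p w))
      linarith
  have hrc : IsClosed (Set.range JW) := hanti.isClosed_range JW.uniformContinuous
  let e : W ≃L[ℝ] JW.range := JW.equivRange hanti.injective hrc
  have he : ∀ z : W, ((e z : JW.range) : Seq2) = toL2 p w z := fun z => rfl
  have : CompleteSpace JW.range := by
    have : IsClosed (JW.range : Set Seq2) := by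
      convert hrc using 1
      exact LinearMap.coe_range _
    exact this.completeSpace_coe
  let Pr : Seq2 →L[ℝ] W := (e.symm : JW.range →L[ℝ] W).comp JW.range.orthogonalProjectionOnto
  have hPr : ∀ z : W, Pr (toL2 p w z) = z := by
    intro z
    have : JW.range.orthogonalProjectionOnto (toL2 p w z) = e z := by
      rw [← he z]
      exact JW.range.orthogonalProjectionOnto_mem_subspace_eq_self (e z)
    change e.symm (JW.range.orthogonalProjectionOnto (toL2 p w z)) = z
    rw [this, ContinuousLinearEquiv.symm_apply_apply]
  let Y : Submodule ℝ (Xpw p w) := X ⊓ (JW.rangeᗮ).comap (toL2 p w).toLinearMap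
  have hYβ : ∀ y ∈ Y, nrm2 y ≤ β * nrmP y := by
    intro y hy
    have hyX : y ∈ X := hy.1
    have hyo : toL2 p w y ∈ JW.rangeᗮ := hy.2
    rcases eq_or_ne (nrmP y) 0 with h0 | h0
    · have h00 : (Xpw.pair y).1 = 0 := norm_eq_zero.1 h0
      have : y = 0 := xext fun n => by
        unfold seq
        rw [h00]; rfl
      rw [this]
      change ‖(0 : Seq2)‖ ≤ β * ‖(0 : SeqP p)‖
      simp
    · have hpos : 0 < nrmP y := lt_of_le_of_ne (hP0 y) h0.symm
      have : ¬ ratio y > β := by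
        intro hr
        obtain ⟨z, hz, hlt⟩ := hb y hyX hr
        have hzW : z ∈ W := Z.le_topologicalClosure hz
        have hzr : toL2 p w z ∈ JW.range := ⟨⟨z, hzW⟩, rfl⟩
        have hin : inner ℝ (toL2 p w y) (toL2 p w z) = 0 :=
          Submodule.inner_left_of_mem_orthogonal hzr hyo
        have hsq := norm_sub_sq_real (toL2 p w y) (toL2 p w z)
        rw [hin, ← map_sub, norm_toL2, norm_toL2, norm_toL2] at hsq
        have h1 : nrm2 (y - z) < nrm2 y := by
          refine hlt.trans_le ?_
          have := mul_le_mul_of_nonneg_right hε1 (h20 y)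
          linarith
        have h2 := h20 (y - z)
        nlinarith [sq_nonneg (nrm2 z)]
      unfold ratio at this
      rw [gt_iff_lt, not_lt] at this
      exact (div_le_iff₀ hpos).1 this
  obtain ⟨A, B, hAB⟩ := assembly p hp w hw Y β hβ hYβ
  obtain ⟨Q, hQ⟩ := hX
  let PX : X →L[ℝ] Xpw p w := W.subtypeL.comp (Pr.comp ((toL2 p w).comp X.subtypeL))
  have hPXY : ∀ x : X, (x : Xpw p w) - PX x ∈ Y := by
    intro x
    refine ⟨X.sub_mem x.2 (hWX (Pr _).2), ?_⟩
    change toL2 p w ((x : Xpw p w) - PX x) ∈ JW.rangeᗮ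
    have : toL2 p w (PX x) = (JW.range.orthogonalProjectionOnto (toL2 p w x) : JW.range) := by
      change toL2 p w (Pr (toL2 p w x) : W) = _
      rw [← he]
      change ((e (e.symm _) : JW.range) : Seq2) = _
      rw [ContinuousLinearEquiv.apply_symm_apply]
      rfl
    rw [map_sub, this]
    exact Submodule.sub_starProjection_mem_orthogonal (K := JW.range) _
  let RY : X →L[ℝ] Y := (X.subtypeL - PX).codRestrict Y hPXY
  refine ⟨(A.comp RY).prod ((toL2 p w).comp PX),
    (Q.comp B).comp (ContinuousLinearMap.fst ℝ (SeqP p) Seq2) +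
      ((W.subtypeL.codRestrict X fun z => hWX z.2).comp Pr).comp (ContinuousLinearMap.snd ℝ (SeqP p) Seq2), ?_⟩
  intro x
  change Q (B (A (RY x))) + Submodule.inclusion hWX (Pr (toL2 p w (Pr (toL2 p w x) : W))) = x
  rw [hPr, hAB]
  have h1 : ((RY x : Y) : Xpw p w) = (x - Submodule.inclusion hWX (Pr (toL2 p w x)) : X) := rfl
  rw [h1, hQ, sub_add_cancel]

/-- Proposition 2.4, direct implication: let `X` be a complemented
subspace of `X_p`, `Z` a subspace of `X`, and `ε, β, β' > 0` with `ε ≤ 1` such that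
(a) `r(z) ≥ β'` for all nonzero `z ∈ Z` and (b) every `x ∈ X` with `r(x) > β` admits
`z ∈ Z` with `|x - z|_2 < ε |x|_2`.  Then `X` is isomorphic to a complemented subspace
of `ℓ_p ⊕ ℓ_2`. -/
theorem stmt13 (p : ℝ) (hp : 2 < p) [Fact (1 ≤ ENNReal.ofReal p)]
    (w : ℕ → ℝ) (hw : IsXpWeight p w)
    (X : Submodule ℝ (Xpw p w)) (hX : X.ClosedComplemented)
    (Z : Submodule ℝ (Xpw p w)) (hZX : Z ≤ X)
    (ε β β' : ℝ) (hε0 : 0 < ε) (hε1 : ε ≤ 1) (hβ : 0 < β) (hβ' : 0 < β')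
    (ha : ∀ z ∈ Z, z ≠ 0 → ratio z ≥ β')
    (hb : ∀ x ∈ X, ratio x > β → ∃ z ∈ Z, nrm2 (x - z) < ε * nrm2 x) :
    ∃ V : Submodule ℝ (SeqP p × Seq2), V.ClosedComplemented ∧
      Nonempty (↥X ≃L[ℝ] ↥V) := by
  obtain ⟨A, B, h⟩ := main_factor p hp w hw.1 X hX Z hZX ε β β' hε1 hβ hβ' ha hb
  refine ⟨A.range, A.closedComplemented_range_of_leftInverse B h, ⟨?_⟩⟩
  refine ContinuousLinearEquiv.equivOfInverse (A.codRestrict A.range fun x => ⟨x, rfl⟩)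
    (B.comp A.range.subtypeL) (fun x => h x) ?_
  rintro ⟨_, x, rfl⟩
  apply Subtype.ext
  change A (B (A x)) = A x
  rw [h x]
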